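/- Let u be an AB-entropy solution of u_t + f(x,u)_x = 0 on ℝ × [0,∞). Then the set-valued map x ↦ C(u,x) has closed graph with respect to uniform convergence: if x_n → x in ℝ, ζ_n ∈ C(u, x_n) for every n, and ζ_n → ζ uniformly on [0,T], then ζ ∈ C(u, x). -/

import Mathlib

open MeasureTheory Set Filter

noncomputable section

/-- The discontinuous flux `f(x,u) = f_l(u)` for `x < 0`, `f_r(u)` for `x > 0`
(the value at the interface is taken to be `f_r(u)`). -/
def dflux (fl fr : ℝ → ℝ) (x u : ℝ) : ℝ := if x < 0 then fl u else fr u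

/-- The connection function `c^{AB}`. -/
def cAB (A B : ℝ) (x : ℝ) : ℝ := if x ≤ 0 then A else B

/-- An `AB`-entropy solution of `u_t + f(x,u)_x = 0` on `ℝ × [0,∞)` with
initial datum `u0`, for the flux `f(x,·) = fl` on `x<0` and `fr` on `x>0`,
relative to the connection `(A,B)`.  The structure bundles the solution `u`
(as a function of `(x,t)`), its one-sided spatial limits `um x t = u(x-,t)` and
`up x t = u(x+,t)` (for `t > 0`), the weak (distributional) formulation, the
Kružkov entropy inequalities away from the interface, the `AB`-interface
entropy inequality, `L¹_loc`-continuity in time and the initial condition. -/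
structure ABSol (fl fr : ℝ → ℝ) (A B : ℝ) (u0 : ℝ → ℝ) where
  u : ℝ → ℝ → ℝ
  meas : Measurable (Function.uncurry u)
  bdd : ∃ M : ℝ, ∀ x t, |u x t| ≤ M
  um : ℝ → ℝ → ℝ
  up : ℝ → ℝ → ℝ
  um_spec : ∀ x t, 0 < t →
    Tendsto (fun y => u y t) (nhdsWithin x (Iio x)) (nhds (um x t))
  up_spec : ∀ x t, 0 < t →
    Tendsto (fun y => u y t) (nhdsWithin x (Ioi x)) (nhds (up x t))
  weak : ∀ φ : ℝ → ℝ → ℝ,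
    ContDiff ℝ 1 (fun p : ℝ × ℝ => φ p.1 p.2) →
    HasCompactSupport (fun p : ℝ × ℝ => φ p.1 p.2) →
    (∀ x t, t ≤ 0 → φ x t = 0) →
    (∫ p : ℝ × ℝ, (u p.1 p.2 * deriv (fun s => φ p.1 s) p.2 +
        dflux fl fr p.1 (u p.1 p.2) * deriv (fun y => φ y p.2) p.1)) = 0
  kruzkov_l : ∀ (k : ℝ) (φ : ℝ → ℝ → ℝ),
    ContDiff ℝ 1 (fun p : ℝ × ℝ => φ p.1 p.2) →
    HasCompactSupport (fun p : ℝ × ℝ => φ p.1 p.2) →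
    (∀ x t, 0 ≤ φ x t) →
    (∀ x t, 0 ≤ x ∨ t ≤ 0 → φ x t = 0) →
    0 ≤ ∫ p : ℝ × ℝ, (|u p.1 p.2 - k| * deriv (fun s => φ p.1 s) p.2 +
        Real.sign (u p.1 p.2 - k) * (fl (u p.1 p.2) - fl k) *
          deriv (fun y => φ y p.2) p.1)
  kruzkov_r : ∀ (k : ℝ) (φ : ℝ → ℝ → ℝ),
    ContDiff ℝ 1 (fun p : ℝ × ℝ => φ p.1 p.2) →
    HasCompactSupport (fun p : ℝ × ℝ => φ p.1 p.2) →
    (∀ x t, 0 ≤ φ x t) →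
    (∀ x t, x ≤ 0 ∨ t ≤ 0 → φ x t = 0) →
    0 ≤ ∫ p : ℝ × ℝ, (|u p.1 p.2 - k| * deriv (fun s => φ p.1 s) p.2 +
        Real.sign (u p.1 p.2 - k) * (fr (u p.1 p.2) - fr k) *
          deriv (fun y => φ y p.2) p.1)
  interfaceEntropy : ∀ φ : ℝ → ℝ → ℝ,
    ContDiff ℝ 1 (fun p : ℝ × ℝ => φ p.1 p.2) →
    HasCompactSupport (fun p : ℝ × ℝ => φ p.1 p.2) →
    (∀ x t, 0 ≤ φ x t) →
    (∀ x t, t ≤ 0 → φ x t = 0) →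
    0 ≤ ∫ p : ℝ × ℝ, (|u p.1 p.2 - cAB A B p.1| * deriv (fun s => φ p.1 s) p.2 +
        Real.sign (u p.1 p.2 - cAB A B p.1) *
          (dflux fl fr p.1 (u p.1 p.2) - dflux fl fr p.1 (cAB A B p.1)) *
          deriv (fun y => φ y p.2) p.1)
  timeCont : ∀ (r t₀ : ℝ), 0 ≤ t₀ →
    Tendsto (fun t => ∫ x in Icc (-r) r, |u x t - u x t₀|)
      (nhdsWithin t₀ (Ici 0)) (nhds 0)
  init : ∀ᵐ x : ℝ ∂volume, u x 0 = u0 x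

/-- `AB`-genuine/interface characteristic for the `AB`-entropy solution `sol`,
on the time interval `[0,T]`, where `γ = f_l(A) = f_r(B)`. -/
def IsABgic (T : ℝ) (fl fr : ℝ → ℝ) (γ : ℝ) {A B : ℝ} {u0 : ℝ → ℝ}
    (sol : ABSol fl fr A B u0) (ζ : ℝ → ℝ) : Prop :=
  (∃ K : NNReal, LipschitzOnWith K ζ (Icc 0 T)) ∧
  (∀ᵐ t ∂(volume.restrict (Icc 0 T)),
    (ζ t < 0 → HasDerivAt ζ (deriv fl (sol.um (ζ t) t)) t ∧
      deriv fl (sol.um (ζ t) t) = deriv fl (sol.up (ζ t) t)) ∧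
    (0 < ζ t → HasDerivAt ζ (deriv fr (sol.um (ζ t) t)) t ∧
      deriv fr (sol.um (ζ t) t) = deriv fr (sol.up (ζ t) t)) ∧
    (ζ t = 0 → fl (sol.um 0 t) = γ ∧ fr (sol.up 0 t) = γ))

/-- `C(u,x)`: the set of `AB`-genuine/interface characteristics of `sol`
reaching `x` at time `T`. -/
def charSet (T : ℝ) (fl fr : ℝ → ℝ) (γ : ℝ) {A B : ℝ} {u0 : ℝ → ℝ}
    (sol : ABSol fl fr A B u0) (x : ℝ) : Set (ℝ → ℝ) :=
  {ζ | IsABgic T fl fr γ sol ζ ∧ ζ T = x}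

/-- `C₀(u,x)`: the set of initial positions `ζ(0)` of characteristics in `C(u,x)`. -/
def charSet0 (T : ℝ) (fl fr : ℝ → ℝ) (γ : ℝ) {A B : ℝ} {u0 : ℝ → ℝ}
    (sol : ABSol fl fr A B u0) (x : ℝ) : Set ℝ :=
  (fun ζ : ℝ → ℝ => ζ 0) '' charSet T fl fr γ sol x

/-- Membership in `L^∞(ℝ)`: measurable and (essentially) bounded. -/
def IsLinf (g : ℝ → ℝ) : Prop :=
  Measurable g ∧ ∃ M : ℝ, ∀ᵐ x : ℝ ∂volume, |g x| ≤ M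

/-- `ω ∈ A^{[AB]}(T)`: the profile `ω` is attainable at time `T`. -/
def Attainable (T : ℝ) (fl fr : ℝ → ℝ) (A B : ℝ) (ω : ℝ → ℝ) : Prop :=
  ∃ u0 : ℝ → ℝ, IsLinf u0 ∧
    ∃ sol : ABSol fl fr A B u0, ∀ᵐ x : ℝ ∂volume, sol.u x T = ω x

/-- `I_T^{[AB]}(ω)`: the set of (bounded) initial data whose `AB`-entropy
solution coincides a.e. with `ω` at time `T`. -/
def InitialSet (T : ℝ) (fl fr : ℝ → ℝ) (A B : ℝ) (ω : ℝ → ℝ) : Set (ℝ → ℝ) :=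
  {u0 | IsLinf u0 ∧
    ∃ sol : ABSol fl fr A B u0, ∀ᵐ x : ℝ ∂volume, sol.u x T = ω x}

/-- `x` is a point of continuity of `ω`: the one-sided limits exist and coincide. -/
def ContinuityPt (ω : ℝ → ℝ) (x : ℝ) : Prop :=
  ∃ l : ℝ, Tendsto ω (nhdsWithin x (Iio x)) (nhds l) ∧
    Tendsto ω (nhdsWithin x (Ioi x)) (nhds l)

/-!
The weak conservation law makes the closed form `u dx - f dt` exact on the half plane: `u` has a
Lipschitz potential `U`. Although `U` is differentiable only almost everywhere, it has the
derivative `u± ζ' - f(u±)` along *every* Lipschitz curve `(ζ(t), t)`, computed with either trace.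

Where `ζ < 0`, equating the two expressions and using convexity, `ζ` is a genuine characteristic
iff `u± ζ' - f_l(u±)` is the Legendre transform of `f_l` at `ζ'`, i.e. iff `U` grows along `ζ` at
least as fast as the potential `p x - f_l(p) t` of each constant state `p`. The same holds with
`f_r` where `ζ > 0`. Where `ζ = 0` the derivative of `U` is minus the trace flux, and the interface
entropy inequality bounds that flux below by `γ`; so the interface condition says that `U` grows at
least as fast as the potential of the connection. Monotonicity of a continuous function along `ζ`
survives uniform limits, and so does the Lipschitz bound, which depends only on `sup |u|`.
-/

open scoped Topology NNReal ContDiff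

section BoundedMeasurable

variable {X Y : Type*} [MeasurableSpace X] [MeasurableSpace Y]

/-- Bounded measurable functions, with an honest (everywhere) bound: the class containing `u`, its
fluxes and all their partial integrals. -/
structure IsBddMeas (g : X → ℝ) : Prop where
  measurable : Measurable g
  exists_bound : ∃ M, ∀ x, ‖g x‖ ≤ M

namespace IsBddMeas

variable {g h : X → ℝ}

theorem comp (hg : IsBddMeas g) {k : Y → X} (hk : Measurable k) : IsBddMeas fun y => g (k y) :=
  ⟨hg.measurable.comp hk, hg.exists_bound.imp fun _ hM y => hM (k y)⟩

theorem sub (hg : IsBddMeas g) (hh : IsBddMeas h) : IsBddMeas fun x => g x - h x := by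
  obtain ⟨⟨M, hM⟩, N, hN⟩ := hg.exists_bound, hh.exists_bound
  exact ⟨hg.measurable.sub hh.measurable, M + N,
    fun x => (norm_sub_le _ _).trans (add_le_add (hM x) (hN x))⟩

theorem continuous_comp (hg : IsBddMeas g) {f : ℝ → ℝ} (hf : Continuous f) :
    IsBddMeas fun x => f (g x) := by
  obtain ⟨M, hM⟩ := hg.exists_bound
  obtain ⟨C, hC⟩ := (isCompact_Icc (a := -M) (b := M)).exists_bound_of_continuousOn hf.continuousOn
  exact ⟨hf.measurable.comp hg.measurable, C, fun x => hC _ (abs_le.1 (hM x))⟩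

theorem ite (hg : IsBddMeas g) (hh : IsBddMeas h) {p : X → Prop} [DecidablePred p]
    (hp : MeasurableSet {x | p x}) : IsBddMeas fun x => if p x then g x else h x := by
  obtain ⟨⟨M, hM⟩, N, hN⟩ := hg.exists_bound, hh.exists_bound
  refine ⟨hg.measurable.ite hp hh.measurable, max M N, fun x => ?_⟩
  split_ifs
  exacts [(hM x).trans (le_max_left _ _), (hN x).trans (le_max_right _ _)]

theorem max (hg : IsBddMeas g) (hh : IsBddMeas h) : IsBddMeas fun x => max (g x) (h x) := by
  obtain ⟨⟨M, hM⟩, N, hN⟩ := hg.exists_bound, hh.exists_bound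
  exact ⟨hg.measurable.max hh.measurable, Max.max M N,
    fun x => abs_max_le_max_abs_abs.trans (max_le_max (hM x) (hN x))⟩

theorem min (hg : IsBddMeas g) (hh : IsBddMeas h) : IsBddMeas fun x => min (g x) (h x) := by
  obtain ⟨⟨M, hM⟩, N, hN⟩ := hg.exists_bound, hh.exists_bound
  exact ⟨hg.measurable.min hh.measurable, Max.max M N,
    fun x => abs_min_le_max_abs_abs.trans (max_le_max (hM x) (hN x))⟩

variable {μ : Measure X}

theorem integrable_mul (hg : IsBddMeas g) {α : X → ℝ} (hα : Integrable α μ) :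
    Integrable (fun x => g x * α x) μ :=
  have ⟨_, hM⟩ := hg.exists_bound
  hα.bdd_mul hg.measurable.aestronglyMeasurable (Eventually.of_forall hM)

theorem integrableOn (hg : IsBddMeas g) {s : Set X} (hs : μ s ≠ ⊤) : IntegrableOn g s μ :=
  have ⟨_, hM⟩ := hg.exists_bound
  Measure.integrableOn_of_bounded hs hg.measurable.aestronglyMeasurable (Eventually.of_forall hM)

theorem locallyIntegrable [TopologicalSpace X] [IsLocallyFiniteMeasure μ] (hg : IsBddMeas g) :
    LocallyIntegrable g μ := fun x =>
  have ⟨s, hs, hμs⟩ := μ.finiteAt_nhds x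
  ⟨s, hs, hg.integrableOn hμs.ne⟩

theorem intervalIntegrable {q : ℝ → ℝ} (hq : IsBddMeas q) (a b : ℝ) :
    IntervalIntegrable q volume a b :=
  (hq.integrableOn isCompact_uIcc.measure_ne_top).intervalIntegrable

theorem exists_lipschitzWith_primitive {q : ℝ → ℝ} (hq : IsBddMeas q) :
    ∃ K : ℝ≥0, ∀ c, LipschitzWith K fun x => ∫ t in c..x, q t := by
  obtain ⟨M, hM⟩ := hq.exists_bound
  refine ⟨M.toNNReal, fun c => LipschitzWith.of_dist_le' fun x y => ?_⟩
  rw [Real.dist_eq, Real.dist_eq, intervalIntegral.integral_interval_sub_left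
    (hq.intervalIntegrable _ _) (hq.intervalIntegrable _ _)]
  exact intervalIntegral.norm_integral_le_of_norm_le_const fun t _ => hM t

variable {G : X → Y → ℝ}

theorem swap (hG : IsBddMeas (Function.uncurry G)) :
    IsBddMeas (Function.uncurry fun y x => G x y) :=
  hG.comp measurable_swap

theorem slice_left (hG : IsBddMeas (Function.uncurry G)) (x : X) : IsBddMeas (G x) :=
  hG.comp measurable_prodMk_left

theorem slice_right (hG : IsBddMeas (Function.uncurry G)) (y : Y) : IsBddMeas fun x => G x y :=
  hG.swap.slice_left y

theorem integral_mul [SFinite μ] (hG : IsBddMeas (Function.uncurry G)) {α : X → ℝ}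
    (hαm : Measurable α) (hα : Integrable α μ) : IsBddMeas fun y => ∫ x, G x y * α x ∂μ := by
  refine ⟨StronglyMeasurable.measurable <| StronglyMeasurable.integral_prod_left'
    (f := fun p : X × Y => G p.1 p.2 * α p.1)
    (hG.measurable.mul (hαm.comp measurable_fst)).stronglyMeasurable, ?_⟩
  obtain ⟨M, hM⟩ := hG.exists_bound
  refine ⟨∫ x, M * ‖α x‖ ∂μ, fun y => norm_integral_le_of_norm_le (hα.norm.const_mul M) <|
    Eventually.of_forall fun x => ?_⟩
  rw [norm_mul]
  exact mul_le_mul_of_nonneg_right (hM (x, y)) (norm_nonneg _)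

theorem intervalIntegral {G : X → ℝ → ℝ} (hG : IsBddMeas (Function.uncurry G)) (s t : ℝ) :
    IsBddMeas fun x => ∫ τ in s..t, G x τ := by
  have slice : ∀ a b, Measurable fun x => ∫ τ in Ioc a b, G x τ := fun a b =>
    (StronglyMeasurable.integral_prod_right' hG.measurable.stronglyMeasurable).measurable
  obtain ⟨M, hM⟩ := hG.exists_bound
  exact ⟨(slice s t).sub (slice t s), M * |t - s|, fun x =>
    intervalIntegral.norm_integral_le_of_norm_le_const fun τ _ => hM (x, τ)⟩

theorem integral_prod_mul_mul {ν : Measure Y} [SFinite μ] [SFinite ν]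
    (hG : IsBddMeas (Function.uncurry G)) {α : X → ℝ} {β : Y → ℝ} (hα : Integrable α μ)
    (hβ : Integrable β ν) :
    ∫ p : X × Y, G p.1 p.2 * (α p.1 * β p.2) ∂μ.prod ν = ∫ y, (∫ x, G x y * α x ∂μ) * β y ∂ν := by
  refine (integral_prod_symm _ (hG.integrable_mul (hα.mul_prod hβ))).trans ?_
  simp only [Function.uncurry_apply_pair, ← mul_assoc, integral_mul_const]

theorem integral_prod_mul_mul' {ν : Measure Y} [SFinite μ] [SFinite ν]
    (hG : IsBddMeas (Function.uncurry G)) {α : X → ℝ} {β : Y → ℝ} (hα : Integrable α μ)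
    (hβ : Integrable β ν) :
    ∫ p : X × Y, G p.1 p.2 * (α p.1 * β p.2) ∂μ.prod ν = ∫ x, (∫ y, G x y * β y ∂ν) * α x ∂μ := by
  refine (integral_prod _ (hG.integrable_mul (hα.mul_prod hβ))).trans ?_
  simp only [Function.uncurry_apply_pair, mul_comm (α _), ← mul_assoc, integral_mul_const]

end IsBddMeas

end BoundedMeasurable

section LipschitzCalculus

variable {a b : ℝ} {H : ℝ → ℝ}

theorem le_of_ae_deriv_nonneg (hH : AbsolutelyContinuousOnInterval H a b) (hab : a ≤ b)
    (h : ∀ᵐ t, t ∈ Ioo a b → 0 ≤ deriv H t) : H a ≤ H b := by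
  rw [← sub_nonneg, ← hH.integral_deriv_eq_sub]
  refine intervalIntegral.integral_nonneg_of_ae_restrict hab ?_
  rwa [← Measure.restrict_congr_set Ioo_ae_eq_Icc, EventuallyLE,
    ae_restrict_iff' measurableSet_Ioo]

theorem lipschitzOnWith_of_ae_abs_deriv_le {K L : ℝ≥0} (hH : LipschitzOnWith K H (Icc a b))
    (h : ∀ᵐ t, t ∈ Ioo a b → |deriv H t| ≤ L) : LipschitzOnWith L H (Icc a b) := by
  refine LipschitzOnWith.of_dist_le_mul fun x hx y hy => ?_
  have hxy : uIcc y x ⊆ Icc a b := ordConnected_Icc.uIcc_subset hy hx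
  have hac : AbsolutelyContinuousOnInterval H y x :=
    (hH.mono hxy).absolutelyContinuousOnInterval
  rw [Real.dist_eq, Real.dist_eq, ← hac.integral_deriv_eq_sub]
  refine intervalIntegral.norm_integral_le_of_norm_le_const_ae (f := deriv H) ?_
  filter_upwards [h, Ioo_ae_eq_Icc (μ := volume) (a := a) (b := b) |>.mem_iff] with t ht hiff htm
  exact ht (hiff.2 (hxy (uIoc_subset_uIcc htm)))

theorem ae_deriv_eq_zero_of_eq (H : ℝ → ℝ) (c : ℝ) : ∀ᵐ t, H t = c → deriv H t = 0 := by
  have isolated := (countable_setOfPred_isolated_right_within (s := {t | H t = c})).measure_zero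
    volume
  rw [measure_eq_zero_iff_ae_notMem] at isolated
  filter_upwards [isolated] with t ht htc
  by_cases hd : DifferentiableAt ℝ H t
  swap
  · exact deriv_zero_of_not_differentiableAt hd
  have : (𝓝[{t | H t = c} ∩ Ioi t] t).NeBot := ⟨fun hbot => ht ⟨htc, hbot⟩⟩
  have hle : 𝓝[{t | H t = c} ∩ Ioi t] t ≤ 𝓝[≠] t :=
    nhdsWithin_mono t fun y hy => (mem_Ioi.1 hy.2).ne'
  refine tendsto_nhds_unique ((hasDerivAt_iff_tendsto_slope.1 hd.hasDerivAt).mono_left hle)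
    (tendsto_const_nhds.congr' ?_)
  filter_upwards [self_mem_nhdsWithin] with y hy
  simp [slope_def_field, show H y = c from hy.1, htc]

theorem ae_hasDerivAt_of_tendsto {S : Set ℝ} (hS : IsOpen S) [S.OrdConnected] {K : ℝ≥0}
    {W : ℕ → ℝ → ℝ} {W₀ D : ℝ → ℝ} (hW : ∀ n, LipschitzWith K (W n))
    (hlim : ∀ t ∈ S, Tendsto (fun n => W n t) atTop (𝓝 (W₀ t)))
    (hderiv : ∀ᵐ t, t ∈ S → Tendsto (fun n => deriv (W n) t) atTop (𝓝 (D t))) :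
    ∀ᵐ t, t ∈ S → HasDerivAt W₀ (D t) t := by
  rcases S.eq_empty_or_nonempty with rfl | ⟨t₀, ht₀⟩
  · simp
  set D' := S.indicator D
  have hderiv' : ∀ᵐ t, Tendsto (fun n => S.indicator (deriv (W n)) t) atTop (𝓝 (D' t)) := by
    filter_upwards [hderiv] with t ht
    by_cases htS : t ∈ S
    · simpa [D', htS] using ht htS
    · simp [D', htS]
  have hmeas : ∀ n, Measurable (S.indicator (deriv (W n))) := fun n =>
    (measurable_deriv _).indicator hS.measurableSet
  have hbound : ∀ n t, ‖S.indicator (deriv (W n)) t‖ ≤ K := fun n t =>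
    (norm_indicator_le_norm_self _ _).trans (norm_deriv_le_of_lipschitz (hW n))
  have hD' : LocallyIntegrable D' := by
    refine fun t => ⟨Metric.ball t 1, Metric.ball_mem_nhds t one_pos,
      Measure.integrableOn_of_bounded (M := (K : ℝ)) measure_ball_lt_top.ne
        (aestronglyMeasurable_of_tendsto_ae atTop
          (fun n => (hmeas n).aestronglyMeasurable) hderiv') ?_⟩
    exact ae_restrict_of_ae (hderiv'.mono fun t ht =>
      le_of_tendsto ht.norm (Eventually.of_forall fun n => hbound n t))
  have hprim : ∀ t ∈ S, W₀ t = (∫ τ in t₀..t, D' τ) + W₀ t₀ := by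
    refine fun t ht => (sub_eq_iff_eq_add.1 ?_)
    refine tendsto_nhds_unique (((hlim t ht).sub (hlim t₀ ht₀)).congr fun n => ?_)
      (intervalIntegral.tendsto_integral_filter_of_dominated_convergence (fun _ => (K : ℝ))
        (Eventually.of_forall fun n => (hmeas n).aestronglyMeasurable)
        (Eventually.of_forall fun n => Eventually.of_forall fun t _ => hbound n t)
        intervalIntegrable_const (hderiv'.mono fun t ht _ => ht))
    rw [← ((hW n).lipschitzOnWith.absolutelyContinuousOnInterval).integral_deriv_eq_sub]
    exact intervalIntegral.integral_congr fun τ hτ =>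
      (indicator_of_mem (Set.OrdConnected.uIcc_subset ‹_› ht₀ ht hτ) _).symm
  filter_upwards [LocallyIntegrable.ae_hasDerivAt_integral hD'] with t ht htS
  rw [show D t = D' t from (indicator_of_mem htS D).symm]
  refine ((ht t₀).add_const (W₀ t₀)).congr_of_eventuallyEq ?_
  filter_upwards [hS.mem_nhds htS] with s hs using hprim s hs

end LipschitzCalculus

section TestFunctions

/-- `C¹` test functions with compact support in `S`, the functions against which the weak
formulations are tested. -/
structure IsTestFun (S : Set ℝ) (β : ℝ → ℝ) : Prop where
  contDiff : ContDiff ℝ 1 β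
  hasCompactSupport : HasCompactSupport β
  tsupport_subset : tsupport β ⊆ S

namespace IsTestFun

variable {S S' : Set ℝ} {β : ℝ → ℝ}

theorem continuous_deriv (hβ : IsTestFun S β) : Continuous (deriv β) :=
  hβ.contDiff.continuous_deriv le_rfl

theorem integrable (hβ : IsTestFun S β) : Integrable β :=
  hβ.contDiff.continuous.integrable_of_hasCompactSupport hβ.hasCompactSupport

theorem integrable_deriv (hβ : IsTestFun S β) : Integrable (deriv β) :=
  hβ.continuous_deriv.integrable_of_hasCompactSupport hβ.hasCompactSupport.deriv

theorem eq_zero_of_notMem (hβ : IsTestFun S β) {x : ℝ} (hx : x ∉ S) : β x = 0 :=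
  image_eq_zero_of_notMem_tsupport fun h => hx (hβ.tsupport_subset h)

end IsTestFun

theorem integral_lipschitz_mul_deriv {W β : ℝ → ℝ} {K : ℝ≥0} (hW : LipschitzWith K W) {S : Set ℝ}
    (hβ : IsTestFun S β) : ∫ x, W x * deriv β x = -∫ x, deriv W x * β x := by
  obtain ⟨C, hC⟩ := hβ.contDiff.lipschitzWith_of_hasCompactSupport hβ.hasCompactSupport one_ne_zero
  have h := hW.integral_lineDeriv_mul_eq hC hβ.hasCompactSupport (1 : ℝ) (μ := volume)
  have hline : ∀ (k : ℝ → ℝ) (x : ℝ), lineDeriv ℝ k x 1 = deriv k x := fun k x => by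
    simp [lineDeriv, deriv_comp_const_add]
  simp only [lineDeriv_neg, hline, neg_mul, integral_neg] at h
  rw [h, neg_neg]
  simp only [mul_comm]

theorem integral_primitive_mul_deriv {q β : ℝ → ℝ} (hq : IsBddMeas q) (c : ℝ) {S : Set ℝ}
    (hβ : IsTestFun S β) : ∫ x, (∫ t in c..x, q t) * deriv β x = -∫ x, q x * β x := by
  obtain ⟨K, hK⟩ := hq.exists_lipschitzWith_primitive
  rw [integral_lipschitz_mul_deriv (hK c) hβ, neg_inj]
  refine integral_congr_ae ?_
  filter_upwards [LocallyIntegrable.ae_hasDerivAt_integral hq.locallyIntegrable] with x hx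
  rw [(hx c).deriv]

theorem isCompact_convexHull_of_real {s : Set ℝ} (hs : IsCompact s) :
    IsCompact (convexHull ℝ s) := by
  rcases s.eq_empty_or_nonempty with rfl | hne
  · simp
  obtain ⟨a, ha, hmin⟩ := hs.exists_isLeast hne
  obtain ⟨b, hb, hmax⟩ := hs.exists_isGreatest hne
  have hsub : s ⊆ Icc a b := fun x hx => ⟨hmin hx, hmax hx⟩
  have hull : convexHull ℝ s = Icc a b :=
    (convexHull_min hsub (convex_Icc a b)).antisymm <| by
      rw [← segment_eq_Icc (hmin hb)]
      exact segment_subset_convexHull ha hb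
  exact hull ▸ isCompact_Icc

theorem exists_isTestFun_deriv_eq {S : Set ℝ} (hS : Convex ℝ S) {g : ℝ → ℝ} (hg : Continuous g)
    (hgc : HasCompactSupport g) (hgS : tsupport g ⊆ S) (hg0 : ∫ x, g x = 0) :
    ∃ β, IsTestFun S β ∧ deriv β = g := by
  have hgi : Integrable g := hg.integrable_of_hasCompactSupport hgc
  set β : ℝ → ℝ := fun x => ∫ t in Iic x, g t
  have hβ : ∀ x, β x = (∫ t in (0 : ℝ)..x, g t) + β 0 := fun x =>
    sub_eq_iff_eq_add.1 (intervalIntegral.integral_Iic_sub_Iic hgi.integrableOn hgi.integrableOn)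
  have hderiv : ∀ x, HasDerivAt β (g x) x := fun x =>
    ((hg.integral_hasStrictDerivAt 0 x).hasDerivAt.add_const (β 0)).congr_of_eventuallyEq
      (Eventually.of_forall hβ)
  have hderiv' : deriv β = g := funext fun x => (hderiv x).deriv
  have hsupp : Function.support β ⊆ convexHull ℝ (tsupport g) := by
    intro x hx
    have hleft : ∃ y ∈ tsupport g, y ≤ x := by
      by_contra! h
      exact hx (setIntegral_eq_zero_of_forall_eq_zero fun t ht =>
        image_eq_zero_of_notMem_tsupport fun hts => (h t hts).not_ge ht)
    have hright : ∃ z ∈ tsupport g, x ≤ z := by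
      by_contra! h
      refine hx ((setIntegral_eq_integral_of_forall_compl_eq_zero fun t ht => ?_).trans hg0)
      exact image_eq_zero_of_notMem_tsupport fun hts => ht (h t hts).le
    obtain ⟨⟨y, hy, hyx⟩, z, hz, hxz⟩ := hleft, hright
    exact (convex_convexHull ℝ _).ordConnected.out (subset_convexHull ℝ _ hy)
      (subset_convexHull ℝ _ hz) ⟨hyx, hxz⟩
  have hcompact : IsCompact (convexHull ℝ (tsupport g)) := isCompact_convexHull_of_real hgc
  refine ⟨β, ⟨?_, HasCompactSupport.of_support_subset_isCompact hcompact hsupp, ?_⟩, hderiv'⟩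
  · rw [contDiff_one_iff_deriv, hderiv']
    exact ⟨fun x => (hderiv x).differentiableAt, hg⟩
  · exact (closure_minimal hsupp hcompact.isClosed).trans (convexHull_min hgS hS)

theorem exists_ae_eq_const_of_integral_mul_deriv_eq_zero {S : Set ℝ} (hS : IsOpen S)
    (hSc : Convex ℝ S) {h : ℝ → ℝ} (hh : LocallyIntegrable h)
    (htest : ∀ β, IsTestFun S β → ∫ x, h x * deriv β x = 0) :
    ∃ c, ∀ᵐ x, x ∈ S → h x = c := by
  rcases S.eq_empty_or_nonempty with rfl | ⟨x₀, hx₀⟩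
  · simp
  obtain ⟨r, hr, hrS⟩ := Metric.isOpen_iff.1 hS x₀ hx₀
  let η : ContDiffBump x₀ := ⟨r / 4, r / 2, by positivity, by linarith⟩
  set g₀ := η.normed volume
  have hg₀S : tsupport g₀ ⊆ S := by
    rw [η.tsupport_normed_eq]
    exact (Metric.closedBall_subset_ball (half_lt_self hr)).trans hrS
  have hint : ∀ {g : ℝ → ℝ}, Continuous g → HasCompactSupport g →
      Integrable fun x => h x * g x := fun hg hgc => by
    simpa only [smul_eq_mul, mul_comm] using hh.integrable_smul_left_of_hasCompactSupport hg hgc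
  set c := ∫ x, h x * g₀ x
  refine ⟨c, ?_⟩
  have hzero := hS.ae_eq_zero_of_integral_contDiff_smul_eq_zero (μ := volume)
    (f := fun x => h x - c) ((hh.sub (locallyIntegrable_const c)).locallyIntegrableOn S) ?_
  · exact hzero.mono fun x hx hxS => sub_eq_zero.1 (hx hxS)
  intro g hg hgc hgS
  have hgi := hg.continuous.integrable_of_hasCompactSupport hgc (μ := volume)
  -- Subtracting the right multiple of `g₀` makes `g` the derivative of a test function.
  obtain ⟨β, hβ, hβ'⟩ := exists_isTestFun_deriv_eq hSc (g := fun x => g x - (∫ y, g y) * g₀ x)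
    (hg.continuous.sub (continuous_const.mul η.continuous_normed))
    (hgc.sub η.hasCompactSupport_normed.mul_left)
    ((tsupport_sub _ _).trans (union_subset hgS ((tsupport_mul_subset_right).trans hg₀S)))
    (by rw [integral_sub hgi (η.integrable_normed.const_mul _), integral_const_mul,
          η.integral_normed, mul_one, sub_self])
  have := htest β hβ
  simp only [hβ', mul_sub, mul_left_comm (h _)] at this
  rw [integral_sub (hint hg.continuous hgc)
    ((hint η.continuous_normed η.hasCompactSupport_normed).const_mul _), integral_const_mul] at this
  simp only [smul_eq_mul, mul_comm (g _), sub_mul]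
  rw [integral_sub (hint hg.continuous hgc) (hgi.const_mul c), integral_const_mul]
  linarith

theorem exists_ae_eq_primitive_add_const {S : Set ℝ} (hS : IsOpen S) (hSc : Convex ℝ S)
    {h q : ℝ → ℝ} (hh : LocallyIntegrable h) (hq : IsBddMeas q)
    (htest : ∀ β, IsTestFun S β → ∫ x, h x * deriv β x = -∫ x, q x * β x) (x₀ : ℝ) :
    ∃ c, ∀ᵐ x, x ∈ S → h x = (∫ y in x₀..x, q y) + c := by
  obtain ⟨K, hK⟩ := hq.exists_lipschitzWith_primitive
  have hprim : LocallyIntegrable fun x => ∫ y in x₀..x, q y :=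
    (hK x₀).continuous.locallyIntegrable
  obtain ⟨c, hc⟩ := exists_ae_eq_const_of_integral_mul_deriv_eq_zero hS hSc (hh.sub hprim) <| by
    intro β hβ
    have hint : ∀ {k : ℝ → ℝ}, LocallyIntegrable k → Integrable fun x => k x * deriv β x :=
      fun hk => by
        simpa only [smul_eq_mul, mul_comm] using
          hk.integrable_smul_left_of_hasCompactSupport hβ.continuous_deriv
            hβ.hasCompactSupport.deriv
    simp only [Pi.sub_apply, sub_mul]
    rw [integral_sub (hint hh) (hint hprim), htest β hβ, integral_primitive_mul_deriv hq x₀ hβ,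
      sub_self]
  exact ⟨c, hc.mono fun x hx hxS => sub_eq_iff_eq_add'.1 (hx hxS)⟩

end TestFunctions

section Potential

/-- The distributional conservation law `u_t + F_x = 0` on the half plane `t > 0`, tested against
the products `α(x) β(t)`. -/
def IsWeakConservationLaw (u F : ℝ → ℝ → ℝ) : Prop :=
  ∀ α β : ℝ → ℝ, IsTestFun univ α → IsTestFun (Ioi 0) β →
    ∫ p : ℝ × ℝ, (u p.1 p.2 * (α p.1 * deriv β p.2) + F p.1 p.2 * (deriv α p.1 * β p.2)) = 0

/-- Lipschitz functions `U` with `dU = u dx - F dt` almost everywhere on the half plane `t > 0`;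
the points of the plane are `(x, t)`. -/
structure IsPotential (u F : ℝ → ℝ → ℝ) (U : ℝ × ℝ → ℝ) : Prop where
  lipschitz : ∃ K, LipschitzWith K U
  hasFDerivAt : ∀ᵐ p : ℝ × ℝ, 0 < p.2 → HasFDerivAt U
    (u p.1 p.2 • ContinuousLinearMap.fst ℝ ℝ ℝ + -F p.1 p.2 • ContinuousLinearMap.snd ℝ ℝ ℝ) p

variable {u F : ℝ → ℝ → ℝ}

theorem IsWeakConservationLaw.integral_sub_integral (hw : IsWeakConservationLaw u F)
    (hu : IsBddMeas (Function.uncurry u)) (hF : IsBddMeas (Function.uncurry F)) {α : ℝ → ℝ}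
    (hα : IsTestFun univ α) (hcont : ContinuousOn (fun t => ∫ x, u x t * α x) (Ioi 0))
    {s t : ℝ} (hs : 0 < s) (ht : 0 < t) :
    (∫ x, u x t * α x) - ∫ x, u x s * α x = ∫ τ in s..t, ∫ x, F x τ * deriv α x := by
  set m : ℝ → ℝ := fun t => ∫ x, u x t * α x
  set q : ℝ → ℝ := fun t => ∫ x, F x t * deriv α x
  have hm : IsBddMeas m := hu.integral_mul hα.contDiff.continuous.measurable hα.integrable
  have hq : IsBddMeas q := hF.integral_mul hα.continuous_deriv.measurable hα.integrable_deriv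
  have htest : ∀ β, IsTestFun (Ioi 0) β → ∫ t, m t * deriv β t = -∫ t, q t * β t := by
    intro β hβ
    have h := (integral_add (hu.integrable_mul (hα.integrable.mul_prod hβ.integrable_deriv))
      (hF.integrable_mul (hα.integrable_deriv.mul_prod hβ.integrable))).symm.trans (hw α β hα hβ)
    simp only [Function.uncurry] at h
    rw [hu.integral_prod_mul_mul hα.integrable hβ.integrable_deriv,
      hF.integral_prod_mul_mul hα.integrable_deriv hβ.integrable] at h
    exact eq_neg_of_add_eq_zero_left h
  obtain ⟨c, hc⟩ := exists_ae_eq_primitive_add_const isOpen_Ioi (convex_Ioi 0)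
    hm.locallyIntegrable hq htest s
  obtain ⟨K, hK⟩ := hq.exists_lipschitzWith_primitive
  have heq : EqOn m (fun t => (∫ τ in s..t, q τ) + c) (Ioi 0) :=
    Measure.eqOn_open_of_ae_eq ((ae_restrict_iff' measurableSet_Ioi).2 hc) isOpen_Ioi hcont
      ((hK s).continuous.add continuous_const).continuousOn
  change m t - m s = _
  rw [heq hs, heq ht]
  simp

theorem exists_integral_flux_ae_eq (hu : IsBddMeas (Function.uncurry u))
    (hF : IsBddMeas (Function.uncurry F)) {s t : ℝ}
    (hbal : ∀ α, IsTestFun univ α →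
      (∫ x, u x t * α x) - ∫ x, u x s * α x = ∫ τ in s..t, ∫ x, F x τ * deriv α x) :
    ∃ c, ∀ᵐ x, ∫ τ in s..t, F x τ = (∫ y in 0..x, (u y s - u y t)) + c := by
  have htest : ∀ α, IsTestFun univ α →
      ∫ x, (∫ τ in s..t, F x τ) * deriv α x = -∫ x, (u x s - u x t) * α x := by
    intro α hα
    have hswap : ∫ τ in s..t, ∫ x, F x τ * deriv α x = ∫ x, (∫ τ in s..t, F x τ) * deriv α x := by
      rw [intervalIntegral_integral_swap]
      · simp only [intervalIntegral.integral_mul_const]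
      · have hone : Integrable (fun _ : ℝ => (1 : ℝ)) (volume.restrict (uIoc s t)) :=
          intervalIntegrable_iff.1 intervalIntegrable_const
        simpa only [Function.uncurry_def, one_mul] using
          hF.swap.integrable_mul (hone.mul_prod hα.integrable_deriv)
    rw [← hswap, ← hbal α hα]
    simp only [sub_mul]
    rw [integral_sub ((hu.slice_right s).integrable_mul hα.integrable)
      ((hu.slice_right t).integrable_mul hα.integrable), neg_sub]
  obtain ⟨c, hc⟩ := exists_ae_eq_primitive_add_const isOpen_univ convex_univ
    (hF.intervalIntegral s t).locallyIntegrable ((hu.slice_right s).sub (hu.slice_right t)) htest 0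
  exact ⟨c, hc.mono fun x hx => hx (mem_univ x)⟩

theorem lipschitzOnWith_setOf_pos_of_slices {U : ℝ × ℝ → ℝ} {K L : ℝ≥0}
    (hx : ∀ t, 0 < t → LipschitzWith K fun x => U (x, t))
    (ht : ∀ x, LipschitzOnWith L (fun t => U (x, t)) (Ioi 0)) :
    LipschitzOnWith (K + L) U {p | 0 < p.2} := by
  refine LipschitzOnWith.of_dist_le_mul ?_
  rintro ⟨x, t⟩ (hp : 0 < t) ⟨y, s⟩ (hq : 0 < s)
  calc dist (U (x, t)) (U (y, s))
      ≤ dist (U (x, t)) (U (y, t)) + dist (U (y, t)) (U (y, s)) := dist_triangle _ _ _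
    _ ≤ K * dist x y + L * dist t s :=
        add_le_add ((hx t hp).dist_le_mul x y) ((ht y).dist_le_mul t hp s hq)
    _ ≤ K * dist (x, t) (y, s) + L * dist (x, t) (y, s) := by
        gcongr
        exacts [le_max_left _ _, le_max_right _ _]
    _ = (K + L : ℝ≥0) * dist (x, t) (y, s) := by rw [NNReal.coe_add, add_mul]

theorem exists_lipschitz_primitive_of_integral_flux_ae_eq (hu : IsBddMeas (Function.uncurry u))
    (hF : IsBddMeas (Function.uncurry F)) {s : ℝ}
    (hbal : ∀ t, 0 < t → ∃ c, ∀ᵐ x, ∫ τ in s..t, F x τ = (∫ y in 0..x, (u y s - u y t)) + c) :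
    ∃ U : ℝ × ℝ → ℝ, (∃ K, LipschitzWith K U) ∧
      (∀ t, 0 < t → ∃ c, ∀ x, U (x, t) = (∫ y in 0..x, u y t) - c) ∧
      ∀ t, 0 < t → ∀ᵐ x, U (x, t) = (∫ y in 0..x, u y s) - ∫ τ in s..t, F x τ := by
  choose! c hc using hbal
  set U₀ : ℝ × ℝ → ℝ := fun p => (∫ y in 0..p.1, u y p.2) - c p.2
  have hU₀ : ∀ t, 0 < t → ∀ᵐ x, U₀ (x, t) = (∫ y in 0..x, u y s) - ∫ τ in s..t, F x τ := by
    intro t ht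
    filter_upwards [hc t ht] with x hx
    rw [hx, intervalIntegral.integral_sub ((hu.slice_right s).intervalIntegrable _ _)
      ((hu.slice_right t).intervalIntegrable _ _)]
    ring
  obtain ⟨M, hM⟩ := hu.exists_bound
  obtain ⟨N, hN⟩ := hF.exists_bound
  have hx : ∀ t, LipschitzWith M.toNNReal fun x => U₀ (x, t) := fun t =>
    LipschitzWith.of_dist_le' fun x y => by
      rw [Real.dist_eq, sub_sub_sub_cancel_right, intervalIntegral.integral_interval_sub_left
        ((hu.slice_right t).intervalIntegrable _ _) ((hu.slice_right t).intervalIntegrable _ _)]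
      exact intervalIntegral.norm_integral_le_of_norm_le_const fun y _ => hM (y, t)
  have ht : ∀ x, LipschitzOnWith N.toNNReal (fun t => U₀ (x, t)) (Ioi 0) := by
    refine fun x => LipschitzOnWith.of_dist_le' fun t ht τ hτ => ?_
    -- The bound holds for almost every `x`, hence for all `x` by continuity.
    have hdense : Dense {x | dist (U₀ (x, t)) (U₀ (x, τ)) ≤ N * dist t τ} := by
      refine Measure.dense_of_ae (μ := volume) ?_
      filter_upwards [hU₀ t ht, hU₀ τ hτ] with x h₁ h₂
      rw [h₁, h₂, dist_sub_left, Real.dist_eq, intervalIntegral.integral_interval_sub_left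
        ((hF.slice_left x).intervalIntegrable _ _) ((hF.slice_left x).intervalIntegrable _ _)]
      exact intervalIntegral.norm_integral_le_of_norm_le_const fun τ _ => hN (x, τ)
    have hclosed : IsClosed {x | dist (U₀ (x, t)) (U₀ (x, τ)) ≤ N * dist t τ} :=
      isClosed_le ((hx t).continuous.dist (hx τ).continuous) continuous_const
    exact hclosed.closure_subset (hdense x)
  obtain ⟨U, hU, hEq⟩ := (lipschitzOnWith_setOf_pos_of_slices (fun t _ => hx t) ht).extend_real
  exact ⟨U, ⟨_, hU⟩, fun t ht => ⟨c t, fun x => (hEq (x := (x, t)) ht).symm⟩,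
    fun t ht => (hU₀ t ht).mono fun x h => (hEq (x := (x, t)) ht).symm.trans h⟩

theorem ae_forall_mem_eq_of_continuousOn {X : Type*} [MeasurableSpace X] {μ : Measure X}
    {S : Set ℝ} {f g : X → ℝ → ℝ} (hf : ∀ x, ContinuousOn (f x) S)
    (hg : ∀ x, ContinuousOn (g x) S) (h : ∀ t ∈ S, ∀ᵐ x ∂μ, f x t = g x t) :
    ∀ᵐ x ∂μ, ∀ t ∈ S, f x t = g x t := by
  obtain ⟨D, hDS, hD, hSD⟩ := (TopologicalSpace.IsSeparable.of_separableSpace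
    S).exists_countable_dense_subset
  filter_upwards [(ae_ball_iff hD).2 fun t ht => h t (hDS ht)] with x hx
  exact EqOn.of_subset_closure hx (hf x) (hg x) hDS hSD

theorem measurableSet_hasDerivAt_with_param {V G : ℝ → ℝ → ℝ}
    (hV : Continuous (Function.uncurry V)) (hG : Measurable (Function.uncurry G)) :
    MeasurableSet {p : ℝ × ℝ | HasDerivAt (V p.1) (G p.1 p.2) p.2} := by
  have : {p : ℝ × ℝ | HasDerivAt (V p.1) (G p.1 p.2) p.2} =
      {p | DifferentiableAt ℝ (V p.1) p.2} ∩ {p | deriv (V p.1) p.2 = G p.1 p.2} :=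
    ext fun p => ⟨fun h => ⟨h.differentiableAt, h.deriv⟩,
      fun ⟨hd, (hG : deriv (V p.1) p.2 = _)⟩ => show HasDerivAt _ _ _ from hG ▸ hd.hasDerivAt⟩
  rw [this]
  exact (measurableSet_of_differentiableAt_with_param ℝ hV).inter
    (measurableSet_eq_fun (measurable_deriv_with_param hV) hG)

theorem hasFDerivAt_of_differentiableAt_of_hasDerivAt {U : ℝ × ℝ → ℝ} {p : ℝ × ℝ} {a b : ℝ}
    (hU : DifferentiableAt ℝ U p) (hx : HasDerivAt (fun x => U (x, p.2)) a p.1)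
    (ht : HasDerivAt (fun t => U (p.1, t)) b p.2) :
    HasFDerivAt U (a • ContinuousLinearMap.fst ℝ ℝ ℝ + b • ContinuousLinearMap.snd ℝ ℝ ℝ) p := by
  have hx' : fderiv ℝ U p (1, 0) = a := HasDerivAt.unique
    (hU.hasFDerivAt.comp_hasDerivAt p.1 ((hasDerivAt_id p.1).prodMk (hasDerivAt_const p.1 p.2))) hx
  have ht' : fderiv ℝ U p (0, 1) = b := HasDerivAt.unique
    (hU.hasFDerivAt.comp_hasDerivAt p.2 ((hasDerivAt_const p.2 p.1).prodMk (hasDerivAt_id p.2))) ht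
  refine hU.hasFDerivAt.congr_fderiv ?_
  ext
  · simp [hx']
  · simp [ht']

theorem IsWeakConservationLaw.exists_isPotential (hw : IsWeakConservationLaw u F)
    (hu : IsBddMeas (Function.uncurry u)) (hF : IsBddMeas (Function.uncurry F))
    (hcont : ∀ α, IsTestFun univ α → ContinuousOn (fun t => ∫ x, u x t * α x) (Ioi 0)) :
    ∃ U, IsPotential u F U := by
  obtain ⟨U, ⟨K, hU⟩, hUx, hUt⟩ := exists_lipschitz_primitive_of_integral_flux_ae_eq hu hF
    fun t ht => exists_integral_flux_ae_eq hu hF fun α hα =>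
      hw.integral_sub_integral hu hF hα (hcont α hα) one_pos ht
  have hpos : MeasurableSet {p : ℝ × ℝ | 0 < p.2} :=
    measurableSet_lt measurable_const measurable_snd
  have hx : ∀ᵐ p : ℝ × ℝ, 0 < p.2 → HasDerivAt (fun x => U (x, p.2)) (u p.1 p.2) p.1 := by
    have hmeas : MeasurableSet {p : ℝ × ℝ | 0 < p.2 →
        HasDerivAt (fun x => U (x, p.2)) (u p.1 p.2) p.1} :=
      hpos.imp (measurable_swap (measurableSet_hasDerivAt_with_param
        (V := fun t x => U (x, t)) (hU.continuous.comp continuous_swap) hu.swap.measurable))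
    rw [Measure.volume_eq_prod, Measure.ae_prod_iff_ae_ae hmeas,
      Measure.ae_ae_comm (p := fun x t => 0 < t → HasDerivAt (fun x => U (x, t)) (u x t) x) hmeas]
    refine Eventually.of_forall fun t => ?_
    filter_upwards [LocallyIntegrable.ae_hasDerivAt_integral (hu.slice_right t).locallyIntegrable]
      with x hx ht
    obtain ⟨c, hc⟩ := hUx t ht
    exact ((hx 0).sub_const c).congr_of_eventuallyEq (Eventually.of_forall hc)
  have ht : ∀ᵐ p : ℝ × ℝ, 0 < p.2 → HasDerivAt (fun t => U (p.1, t)) (-F p.1 p.2) p.2 := by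
    have hmeas := hpos.imp (measurableSet_hasDerivAt_with_param
      (V := fun x t => U (x, t)) (G := fun x t => -F x t) hU.continuous hF.measurable.neg)
    rw [Measure.volume_eq_prod, Measure.ae_prod_iff_ae_ae hmeas]
    have hprim : ∀ x, Continuous fun t => (∫ y in 0..x, u y 1) - ∫ τ in 1..t, F x τ := fun x =>
      have ⟨_, hL⟩ := (hF.slice_left x).exists_lipschitzWith_primitive
      continuous_const.sub (hL 1).continuous
    filter_upwards [ae_forall_mem_eq_of_continuousOn (S := Ioi 0) (f := fun x t => U (x, t))
      (fun x => (hU.continuous.comp (Continuous.prodMk_right x)).continuousOn)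
      (fun x => (hprim x).continuousOn) hUt] with x hUx
    filter_upwards [LocallyIntegrable.ae_hasDerivAt_integral (hF.slice_left x).locallyIntegrable]
      with t hFt ht
    refine ((hFt 1).const_sub (∫ y in 0..x, u y 1)).congr_of_eventuallyEq ?_
    filter_upwards [Ioi_mem_nhds ht] with s hs using hUx s hs
  refine ⟨U, ⟨K, hU⟩, ?_⟩
  filter_upwards [hU.ae_differentiableAt, hx, ht] with p hd hpx hpt hp
  exact hasFDerivAt_of_differentiableAt_of_hasDerivAt hd (hpx hp) (hpt hp)

end Potential

section Curves

theorem ae_ae_add_prodMk {P : ℝ × ℝ → Prop} (hP : ∀ᵐ p, P p) {Z : ℝ → ℝ} (hZ : Measurable Z) :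
    ∀ᵐ y, ∀ᵐ t, P (Z t + y, t) := by
  have hshear : MeasurePreserving (fun q : ℝ × ℝ => (q.1, Z q.1 + q.2))
      (volume.prod volume) (volume.prod volume) :=
    (MeasurePreserving.id volume).skew_product (g := fun t y => Z t + y)
      ((hZ.comp measurable_fst).add measurable_snd)
      (Eventually.of_forall fun t => (measurePreserving_add_left volume (Z t)).map_eq)
  have hswap := Measure.measurePreserving_swap (μ := (volume : Measure ℝ))
    (ν := (volume : Measure ℝ))
  exact Measure.ae_ae_of_ae_prod
    ((hswap.comp (hshear.comp hswap)).quasiMeasurePreserving.ae hP)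

theorem exists_seq_tendsto_nhdsWithin_of_ae {p : ℝ → Prop} (hp : ∀ᵐ y, p y) {S : Set ℝ}
    (hS : IsOpen S) {c : ℝ} (hc : c ∈ closure S) :
    ∃ y : ℕ → ℝ, Tendsto y atTop (𝓝[S] c) ∧ ∀ n, p (y n) := by
  have hcl : c ∈ closure (S ∩ {y | p y}) :=
    closure_minimal ((Measure.dense_of_ae hp).open_subset_closure_inter hS) isClosed_closure hc
  obtain ⟨y, hyS, hy⟩ := mem_closure_iff_seq_limit.1 hcl
  exact ⟨y, tendsto_nhdsWithin_iff.2 ⟨hy, Eventually.of_forall fun n => (hyS n).1⟩,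
    fun n => (hyS n).2⟩

/-- The curve need not be transversal to the set where `U` fails to be differentiable; almost every
horizontal translate of it is, and the derivatives along the translates converge. -/
theorem IsPotential.ae_hasDerivAt_comp_curve {u F : ℝ → ℝ → ℝ} {U : ℝ × ℝ → ℝ}
    (hU : IsPotential u F U) {Z : ℝ → ℝ} {L : ℝ≥0} (hZ : LipschitzWith L Z) {S : Set ℝ}
    (hS : IsOpen S) (h0 : 0 ∈ closure S) {v w : ℝ → ℝ}
    (hv : ∀ t, 0 < t → Tendsto (fun y => u (Z t + y) t) (𝓝[S] 0) (𝓝 (v t)))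
    (hw : ∀ t, 0 < t → Tendsto (fun y => F (Z t + y) t) (𝓝[S] 0) (𝓝 (w t))) :
    ∀ᵐ t, 0 < t → HasDerivAt (fun s => U (Z s, s)) (v t * deriv Z t - w t) t := by
  obtain ⟨K, hK⟩ := hU.lipschitz
  obtain ⟨y, hy, hyU⟩ := exists_seq_tendsto_nhdsWithin_of_ae
    (ae_ae_add_prodMk hU.hasFDerivAt hZ.continuous.measurable) hS h0
  set W : ℕ → ℝ → ℝ := fun n s => U (Z s + y n, s)
  have hW : ∀ n, LipschitzWith (K * max (L + 0) 1) (W n) := fun n =>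
    hK.comp ((hZ.add (LipschitzWith.const (y n))).prodMk LipschitzWith.id)
  have hlim : ∀ t ∈ Ioi (0 : ℝ), Tendsto (fun n => W n t) atTop (𝓝 (U (Z t, t))) := by
    intro t _
    have hcont : Continuous fun c => U (Z t + c, t) := hK.continuous.comp (by fun_prop)
    exact (hcont.tendsto' 0 _ (by rw [add_zero])).comp (hy.mono_right nhdsWithin_le_nhds)
  refine ae_hasDerivAt_of_tendsto isOpen_Ioi hW hlim ?_
  filter_upwards [ae_all_iff.2 hyU, hZ.ae_differentiableAt] with t hd hZd ht
  refine ((((hv t ht).comp hy).mul_const _).sub ((hw t ht).comp hy)).congr fun n => ?_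
  have hWd : HasDerivAt (W n) _ t := (hd n ht).comp_hasDerivAt (f := fun s => (Z s + y n, s)) t
    ((hZd.hasDerivAt.add_const (y n)).prodMk (hasDerivAt_id t))
  simp [hWd.deriv, sub_eq_add_neg]

end Curves

section Interface

namespace IsBddMeas

variable {X Y : Type*} [MeasurableSpace X] [MeasurableSpace Y] {Q : X → Y → ℝ} {q : Y → ℝ}
  {l : Filter X} [l.IsCountablyGenerated]

theorem tendsto_integral_mul (hQ : IsBddMeas (Function.uncurry Q)) {μ : Measure Y} {β : Y → ℝ}
    (hβ : Integrable β μ) (hlim : ∀ᵐ y ∂μ, β y ≠ 0 → Tendsto (fun x => Q x y) l (𝓝 (q y))) :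
    Tendsto (fun x => ∫ y, Q x y * β y ∂μ) l (𝓝 (∫ y, q y * β y ∂μ)) := by
  obtain ⟨M, hM⟩ := hQ.exists_bound
  refine tendsto_integral_filter_of_dominated_convergence (fun y => M * ‖β y‖)
    (Eventually.of_forall fun x => ((hQ.slice_left x).integrable_mul hβ).aestronglyMeasurable)
    (Eventually.of_forall fun x => Eventually.of_forall fun y => ?_) (hβ.norm.const_mul M) ?_
  · rw [norm_mul]
    exact mul_le_mul_of_nonneg_right (hM (x, y)) (norm_nonneg _)
  · filter_upwards [hlim] with y hy
    by_cases hβy : β y = 0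
    · simp only [hβy, mul_zero, tendsto_const_nhds]
    · exact (hy hβy).mul_const _

theorem indicator_of_tendsto [l.NeBot] (hQ : IsBddMeas (Function.uncurry Q)) {S : Set Y}
    (hS : MeasurableSet S) (hlim : ∀ y ∈ S, Tendsto (fun x => Q x y) l (𝓝 (q y))) :
    IsBddMeas (S.indicator q) := by
  have hlim' : ∀ y, Tendsto (fun x => S.indicator (Q x) y) l (𝓝 (S.indicator q y)) := by
    intro y
    by_cases hy : y ∈ S
    · simpa only [indicator_of_mem hy] using hlim y hy
    · simp only [indicator_of_notMem hy, tendsto_const_nhds]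
  obtain ⟨M, hM⟩ := hQ.exists_bound
  refine ⟨measurable_of_tendsto_metrizable' l
    (fun x => (hQ.slice_left x).measurable.indicator hS) (tendsto_pi_nhds.2 hlim'), M, fun y => ?_⟩
  exact le_of_tendsto (hlim' y).norm
    (Eventually.of_forall fun x => (norm_indicator_le_norm_self _ _).trans (hM (x, y)))

end IsBddMeas

theorem tendsto_integral_comp_mul_mul {P g : ℝ → ℝ} (hP : IsBddMeas P) {Pm Pp : ℝ}
    (hm : Tendsto P (𝓝[<] 0) (𝓝 Pm)) (hp : Tendsto P (𝓝[>] 0) (𝓝 Pp)) (hg : Integrable g) :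
    Tendsto (fun c => ∫ z, P (c * z) * g z) (𝓝[>] 0)
      (𝓝 (Pm * (∫ z in Iic 0, g z) + Pp * ∫ z in Ioi 0, g z)) := by
  set step : ℝ → ℝ := (Iic 0).piecewise (fun _ => Pm) fun _ => Pp
  have hsplit : ∫ z, step z * g z = Pm * (∫ z in Iic 0, g z) + Pp * ∫ z in Ioi 0, g z := by
    have heq : (fun z => step z * g z) =
        (Iic 0).piecewise (fun z => Pm * g z) fun z => Pp * g z := by
      ext z
      by_cases hz : z ∈ Iic 0 <;> simp only [step, hz, piecewise_eq_of_mem, not_false_eq_true,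
        piecewise_eq_of_notMem]
    rw [heq, integral_piecewise measurableSet_Iic (hg.const_mul _).integrableOn
      (hg.const_mul _).integrableOn, compl_Iic, integral_const_mul, integral_const_mul]
  rw [← hsplit]
  refine IsBddMeas.tendsto_integral_mul (Q := fun c z => P (c * z))
    (hP.comp (measurable_fst.mul measurable_snd)) hg ?_
  filter_upwards [compl_mem_ae_iff.2 (measure_singleton (0 : ℝ))] with z hz _
  have h0 : Tendsto (fun c => c * z) (𝓝[>] 0) (𝓝 0) :=
    ((continuous_mul_const z).tendsto' 0 0 (zero_mul z)).mono_left nhdsWithin_le_nhds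
  rcases lt_or_gt_of_ne (mem_compl_singleton_iff.1 hz) with hneg | hpos
  · rw [show step z = Pm from piecewise_eq_of_mem _ _ _ hneg.le]
    refine hm.comp (tendsto_nhdsWithin_iff.2 ⟨h0, ?_⟩)
    filter_upwards [self_mem_nhdsWithin] with c hc using mul_neg_of_pos_of_neg hc hneg
  · rw [show step z = Pp from piecewise_eq_of_notMem _ _ _ hpos.not_ge]
    refine hp.comp (tendsto_nhdsWithin_iff.2 ⟨h0, ?_⟩)
    filter_upwards [self_mem_nhdsWithin] with c hc using mul_pos hc hpos

theorem le_of_integral_add_integral_deriv_nonneg {P R : ℝ → ℝ} (hP : IsBddMeas P)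
    (hR : IsBddMeas R) {Pm Pp : ℝ} (hm : Tendsto P (𝓝[<] 0) (𝓝 Pm))
    (hp : Tendsto P (𝓝[>] 0) (𝓝 Pp))
    (htest : ∀ α, IsTestFun univ α → (∀ x, 0 ≤ α x) →
      0 ≤ (∫ x, R x * α x) + ∫ x, P x * deriv α x) : Pp ≤ Pm := by
  let α : ContDiffBump (0 : ℝ) := ⟨1, 2, one_pos, one_lt_two⟩
  have hα : IsTestFun univ α := ⟨α.contDiff, α.hasCompactSupport, subset_univ _⟩
  obtain ⟨M, hM⟩ := hR.exists_bound
  have hscaled : ∀ c, 0 < c →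
      0 ≤ c * (∫ z, R (c * z) * α z) + ∫ z, P (c * z) * deriv α z := by
    intro c hc
    have hα' : IsTestFun univ fun x => α (c⁻¹ * x) :=
      ⟨α.contDiff.comp (contDiff_const.mul contDiff_id),
        α.hasCompactSupport.comp_homeomorph (Homeomorph.mulLeft₀ c⁻¹ (inv_ne_zero hc.ne')),
        subset_univ _⟩
    have hsubst : ∀ G : ℝ → ℝ, ∫ x, G x = c * ∫ z, G (c * z) := fun G => by
      rw [Measure.integral_comp_mul_left, abs_of_pos (inv_pos.2 hc), smul_eq_mul,
        mul_inv_cancel_left₀ hc.ne']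
    have h := htest _ hα' fun x => α.nonneg
    rw [hsubst, hsubst fun x => P x * deriv (fun x => α (c⁻¹ * x)) x, ← integral_const_mul c
      fun z => P (c * z) * _] at h
    refine h.trans_eq (congr_arg₂ _ ?_ (integral_congr_ae (Eventually.of_forall fun z => ?_)))
    · simp only [inv_mul_cancel_left₀ hc.ne']
    · simp only [deriv_comp_mul_left, inv_mul_cancel_left₀ hc.ne', smul_eq_mul]
      field_simp
  have hRlim : Tendsto (fun c => c * ∫ z, R (c * z) * α z) (𝓝[>] 0) (𝓝 0) := by
    refine (tendsto_id.mono_left nhdsWithin_le_nhds).zero_mul_isBoundedUnder_le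
      (isBoundedUnder_of ⟨∫ z, M * ‖α z‖, fun c => norm_integral_le_of_norm_le
        (hα.integrable.norm.const_mul M) (Eventually.of_forall fun z => ?_)⟩)
    rw [norm_mul]
    exact mul_le_mul_of_nonneg_right (hM _) (norm_nonneg _)
  have hlim := ge_of_tendsto
    (hRlim.add (tendsto_integral_comp_mul_mul hP hm hp hα.integrable_deriv))
    (eventually_mem_nhdsWithin.mono hscaled)
  rw [hα.hasCompactSupport.integral_Iic_deriv_eq hα.contDiff,
    hα.hasCompactSupport.integral_Ioi_deriv_eq hα.contDiff,
    α.one_of_mem_closedBall (Metric.mem_closedBall_self zero_le_one)] at hlim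
  linarith

theorem ae_nonneg_of_integral_mul_nonneg {S : Set ℝ} (hS : IsOpen S) {g : ℝ → ℝ}
    (hg : LocallyIntegrable g)
    (htest : ∀ β, IsTestFun S β → (∀ t, 0 ≤ β t) → 0 ≤ ∫ t, g t * β t) :
    ∀ᵐ t, t ∈ S → 0 ≤ g t := by
  let ψ : ℕ → ContDiffBump (0 : ℝ) := fun n => ⟨((n : ℝ) + 1)⁻¹, 2 * ((n : ℝ) + 1)⁻¹,
    by positivity, lt_two_mul_self (by positivity)⟩
  have hr : Tendsto (fun n => (ψ n).rOut) atTop (𝓝 0) := by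
    simpa [ψ] using (tendsto_one_div_add_atTop_nhds_zero_nat (𝕜 := ℝ)).const_mul 2
  filter_upwards [ContDiffBump.ae_convolution_tendsto_right_of_locallyIntegrable
    (φ := ψ) (K := 2) hr (Eventually.of_forall fun n => le_rfl) hg] with t ht htS
  obtain ⟨r, hrpos, hrS⟩ := Metric.isOpen_iff.1 hS t htS
  refine ge_of_tendsto ht ?_
  filter_upwards [hr.eventually_lt_const hrpos] with n hn
  have hβ : IsTestFun S fun s => (ψ n).normed volume (t - s) := by
    refine ⟨(ψ n).contDiff_normed.comp (contDiff_const.sub contDiff_id),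
      (ψ n).hasCompactSupport_normed.comp_homeomorph (Homeomorph.subLeft t), fun s hs => hrS ?_⟩
    have hts := tsupport_comp_subset_preimage ((ψ n).normed volume)
      (Homeomorph.subLeft t).continuous hs
    rw [mem_preimage, (ψ n).tsupport_normed_eq, Homeomorph.coe_subLeft, mem_closedBall_zero_iff]
      at hts
    rw [Metric.mem_ball, dist_comm, dist_eq_norm]
    exact hts.trans_lt hn
  rw [convolution_eq_swap]
  refine (htest _ hβ fun s => (ψ n).nonneg_normed _).trans_eq ?_
  simp only [ContinuousLinearMap.lsmul_apply, smul_eq_mul, mul_comm]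

/-- The distributional inequality `E_t + Q_x ≤ 0` on the half plane `t > 0`, tested against
nonnegative products `α(x) β(t)`. -/
def IsWeakEntropyInequality (E Q : ℝ → ℝ → ℝ) : Prop :=
  ∀ α β : ℝ → ℝ, IsTestFun univ α → IsTestFun (Ioi 0) β → (∀ x, 0 ≤ α x) → (∀ t, 0 ≤ β t) →
    0 ≤ ∫ p : ℝ × ℝ, (E p.1 p.2 * (α p.1 * deriv β p.2) + Q p.1 p.2 * (deriv α p.1 * β p.2))

theorem IsWeakEntropyInequality.ae_trace_le {E Q : ℝ → ℝ → ℝ} (h : IsWeakEntropyInequality E Q)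
    (hE : IsBddMeas (Function.uncurry E)) (hQ : IsBddMeas (Function.uncurry Q)) {Qm Qp : ℝ → ℝ}
    (hm : ∀ t, 0 < t → Tendsto (fun x => Q x t) (𝓝[<] 0) (𝓝 (Qm t)))
    (hp : ∀ t, 0 < t → Tendsto (fun x => Q x t) (𝓝[>] 0) (𝓝 (Qp t))) :
    ∀ᵐ t, 0 < t → Qp t ≤ Qm t := by
  have hQm := hQ.indicator_of_tendsto measurableSet_Ioi hm
  have hQp := hQ.indicator_of_tendsto measurableSet_Ioi hp
  have htest : ∀ β, IsTestFun (Ioi 0) β → (∀ t, 0 ≤ β t) →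
      0 ≤ ∫ t, ((Ioi 0).indicator Qm t - (Ioi 0).indicator Qp t) * β t := by
    intro β hβ hβ0
    have trace : ∀ {l : Filter ℝ} [l.IsCountablyGenerated] {q : ℝ → ℝ},
        (∀ t, 0 < t → Tendsto (fun x => Q x t) l (𝓝 (q t))) →
        Tendsto (fun x => ∫ t, Q x t * β t) l (𝓝 (∫ t, (Ioi 0).indicator q t * β t)) := by
      intro l _ q hq
      refine hQ.tendsto_integral_mul hβ.integrable (Eventually.of_forall fun t ht => ?_)
      have htpos : t ∈ Ioi 0 := not_imp_comm.1 hβ.eq_zero_of_notMem ht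
      rw [indicator_of_mem htpos]
      exact hq t htpos
    simp only [sub_mul]
    rw [integral_sub (hQm.integrable_mul hβ.integrable) (hQp.integrable_mul hβ.integrable),
      sub_nonneg]
    refine le_of_integral_add_integral_deriv_nonneg
      (hQ.swap.integral_mul hβ.contDiff.continuous.measurable hβ.integrable)
      (hE.swap.integral_mul hβ.continuous_deriv.measurable hβ.integrable_deriv)
      (trace hm) (trace hp) fun α hα hα0 => ?_
    rw [← hE.integral_prod_mul_mul' hα.integrable hβ.integrable_deriv,
      ← hQ.integral_prod_mul_mul' hα.integrable_deriv hβ.integrable]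
    exact (h α β hα hβ hα0 hβ0).trans_eq
      (integral_add (hE.integrable_mul (hα.integrable.mul_prod hβ.integrable_deriv))
        (hQ.integrable_mul (hα.integrable_deriv.mul_prod hβ.integrable)))
  filter_upwards [ae_nonneg_of_integral_mul_nonneg isOpen_Ioi
    (hQm.sub hQp).locallyIntegrable htest] with t ht htpos
  have := ht htpos
  rwa [indicator_of_mem (mem_Ioi.2 htpos), indicator_of_mem (mem_Ioi.2 htpos), sub_nonneg] at this

end Interface

section Convexity

variable {f : ℝ → ℝ} {p q z : ℝ}

theorem convexOn_univ_of_deriv2_pos (hf : Differentiable ℝ f)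
    (h : ∀ x, 0 < deriv (deriv f) x) : ConvexOn ℝ univ f :=
  (strictMono_of_deriv_pos h).monotone.convexOn_univ_of_deriv hf

theorem add_deriv_mul_sub_le_of_convexOn (hf : ConvexOn ℝ univ f) (hd : DifferentiableAt ℝ f q)
    (p : ℝ) : f q + deriv f q * (p - q) ≤ f p := by
  rcases lt_trichotomy p q with h | rfl | h
  · have hslope := hf.slope_le_deriv (mem_univ p) (mem_univ q) h hd
    rw [slope_def_field, div_le_iff₀ (sub_pos.2 h)] at hslope
    linarith
  · simp
  · have hslope := hf.deriv_le_slope (mem_univ q) (mem_univ p) h hd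
    rw [slope_def_field, le_div_iff₀ (sub_pos.2 h)] at hslope
    linarith

theorem forall_mul_sub_le_iff_deriv_eq (hf : ConvexOn ℝ univ f) (hd : DifferentiableAt ℝ f q) :
    (∀ p, p * z - f p ≤ q * z - f q) ↔ deriv f q = z := by
  constructor
  · intro h
    have hmax : IsLocalMax (fun p => p * z - f p) q := Eventually.of_forall h
    have hderiv : HasDerivAt (fun p => p * z - f p) (1 * z - deriv f q) q :=
      ((hasDerivAt_id q).mul_const z).sub hd.hasDerivAt
    linarith [hmax.hasDerivAt_eq_zero hderiv]
  · rintro rfl p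
    linarith [add_deriv_mul_sub_le_of_convexOn hf hd p]

theorem eq_deriv_and_deriv_eq_iff (hf : ConvexOn ℝ univ f) (hd : Differentiable ℝ f) {D v w : ℝ}
    (hv : D = v * z - f v) (hw : D = w * z - f w) :
    z = deriv f v ∧ deriv f v = deriv f w ↔ ∀ p, p * z - f p ≤ D := by
  have hvz := forall_mul_sub_le_iff_deriv_eq (z := z) hf (hd v)
  have hwz := forall_mul_sub_le_iff_deriv_eq (z := z) hf (hd w)
  rw [← hv] at hvz
  rw [← hw] at hwz
  exact ⟨fun h => hvz.2 h.1.symm,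
    fun h => ⟨(hvz.1 h).symm, (hvz.1 h).trans (hwz.1 h).symm⟩⟩

theorem le_of_convexOn_of_deriv_nonpos (hf : ConvexOn ℝ univ f) (hd : DifferentiableAt ℝ f q)
    (hq : deriv f q ≤ 0) (hp : p ≤ q) : f q ≤ f p :=
  (le_add_of_nonneg_right (mul_nonneg_of_nonpos_of_nonpos hq (sub_nonpos.2 hp))).trans
    (add_deriv_mul_sub_le_of_convexOn hf hd p)

theorem le_of_convexOn_of_deriv_nonneg (hf : ConvexOn ℝ univ f) (hd : DifferentiableAt ℝ f q)
    (hq : 0 ≤ deriv f q) (hp : q ≤ p) : f q ≤ f p :=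
  (le_add_of_nonneg_right (mul_nonneg hq (sub_nonneg.2 hp))).trans
    (add_deriv_mul_sub_le_of_convexOn hf hd p)

end Convexity

section Flux

variable {fl fr g : ℝ → ℝ} {A B l z : ℝ}

theorem sign_sub_mul_sub_eq_max_sub_min (f : ℝ → ℝ) (v k : ℝ) :
    Real.sign (v - k) * (f v - f k) = f (max v k) - f (min v k) := by
  rcases lt_trichotomy v k with h | rfl | h
  · rw [Real.sign_of_neg (sub_neg.2 h), max_eq_right h.le, min_eq_left h.le]
    ring
  · simp
  · rw [Real.sign_of_pos (sub_pos.2 h), max_eq_left h.le, min_eq_right h.le, one_mul]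

theorem le_flux_of_entropyFlux_le (hA : ∀ v ≤ A, fl A ≤ fl v) (hB : ∀ w, B ≤ w → fr B ≤ fr w)
    (hAB : fl A = fr B) {v w : ℝ} (hvw : fl v = fr w)
    (hent : fr (max w B) - fr (min w B) ≤ fl (max v A) - fl (min v A)) : fl A ≤ fl v := by
  by_contra! hlt
  have hv : A < v := lt_of_not_ge fun h => hlt.not_ge (hA v h)
  have hw : w < B := lt_of_not_ge fun h => (hAB ▸ hvw ▸ hlt).not_ge (hB w h)
  rw [max_eq_right hw.le, min_eq_left hw.le, max_eq_left hv.le, min_eq_right hv.le] at hent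
  linarith

theorem tendsto_dflux_nhdsLT (hl : Continuous fl) (hr : Continuous fr)
    (hg : Tendsto g (𝓝[<] z) (𝓝 l)) :
    Tendsto (fun y => dflux fl fr y (g y)) (𝓝[<] z) (𝓝 (if z ≤ 0 then fl l else fr l)) := by
  split_ifs with hz
  · refine ((hl.tendsto l).comp hg).congr' ?_
    filter_upwards [self_mem_nhdsWithin] with y hy using (if_pos (lt_of_lt_of_le hy hz)).symm
  · refine ((hr.tendsto l).comp hg).congr' ?_
    filter_upwards [mem_nhdsWithin_of_mem_nhds (Ioi_mem_nhds (not_le.1 hz))] with y hy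
      using (if_neg (not_lt_of_gt hy)).symm

theorem tendsto_dflux_nhdsGT (hl : Continuous fl) (hr : Continuous fr)
    (hg : Tendsto g (𝓝[>] z) (𝓝 l)) :
    Tendsto (fun y => dflux fl fr y (g y)) (𝓝[>] z) (𝓝 (if z < 0 then fl l else fr l)) := by
  split_ifs with hz
  · refine ((hl.tendsto l).comp hg).congr' ?_
    filter_upwards [mem_nhdsWithin_of_mem_nhds (Iio_mem_nhds hz)] with y hy
      using (if_pos hy).symm
  · refine ((hr.tendsto l).comp hg).congr' ?_
    filter_upwards [self_mem_nhdsWithin] with y hy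
      using (if_neg ((not_lt.1 hz).trans_lt hy).not_gt).symm

theorem tendsto_cAB_nhdsLT_zero (A B : ℝ) : Tendsto (cAB A B) (𝓝[<] 0) (𝓝 A) :=
  tendsto_const_nhds.congr' <| eventually_mem_nhdsWithin.mono fun _ hy =>
    (if_pos (le_of_lt hy)).symm

theorem tendsto_cAB_nhdsGT_zero (A B : ℝ) : Tendsto (cAB A B) (𝓝[>] 0) (𝓝 B) :=
  tendsto_const_nhds.congr' <| eventually_mem_nhdsWithin.mono fun _ hy =>
    (if_neg (not_le_of_gt hy)).symm

variable {X : Type*} [MeasurableSpace X] {k v : X → ℝ}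

theorem isBddMeas_cAB (A B : ℝ) : IsBddMeas (cAB A B) :=
  ⟨measurable_const.ite measurableSet_Iic measurable_const, max ‖A‖ ‖B‖, fun x => by
    unfold cAB; split_ifs; exacts [le_max_left _ _, le_max_right _ _]⟩

theorem isBddMeas_dflux (hl : Continuous fl) (hr : Continuous fr) (hk : Measurable k)
    (hv : IsBddMeas v) : IsBddMeas fun p => dflux fl fr (k p) (v p) :=
  (hv.continuous_comp hl).ite (hv.continuous_comp hr) (hk measurableSet_Iio)

end Flux

section Solution

theorem IsTestFun.contDiff_mul {S S' : Set ℝ} {α β : ℝ → ℝ} (hα : IsTestFun S α)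
    (hβ : IsTestFun S' β) : ContDiff ℝ 1 fun p : ℝ × ℝ => α p.1 * β p.2 :=
  (hα.contDiff.comp contDiff_fst).mul (hβ.contDiff.comp contDiff_snd)

theorem IsTestFun.hasCompactSupport_mul {S S' : Set ℝ} {α β : ℝ → ℝ} (hα : IsTestFun S α)
    (hβ : IsTestFun S' β) : HasCompactSupport fun p : ℝ × ℝ => α p.1 * β p.2 :=
  HasCompactSupport.intro (hα.hasCompactSupport.isCompact.prod hβ.hasCompactSupport.isCompact)
    fun p hp => by
      rcases not_and_or.1 (mt mem_prod.2 hp) with h | h <;>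
        simp [image_eq_zero_of_notMem_tsupport h]

theorem tendsto_const_add_nhdsWithin (z : ℝ) {S S' : Set ℝ} (h : MapsTo (z + ·) S S') :
    Tendsto (z + ·) (𝓝[S] 0) (𝓝[S'] z) := by
  simpa only [add_zero] using
    (continuous_const_add z).continuousWithinAt.tendsto_nhdsWithin (x := 0) h

namespace ABSol

variable {fl fr : ℝ → ℝ} {A B : ℝ} {u0 : ℝ → ℝ} (sol : ABSol fl fr A B u0)

theorem isBddMeas_uncurry_u : IsBddMeas (Function.uncurry sol.u) :=
  ⟨sol.meas, sol.bdd.imp fun _ hM p => hM p.1 p.2⟩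

theorem exists_abs_trace_le : ∃ M, ∀ x t, 0 < t → |sol.um x t| ≤ M ∧ |sol.up x t| ≤ M := by
  obtain ⟨M, hM⟩ := sol.bdd
  exact ⟨M, fun x t ht =>
    ⟨le_of_tendsto (sol.um_spec x t ht).norm (Eventually.of_forall fun y => hM y t),
      le_of_tendsto (sol.up_spec x t ht).norm (Eventually.of_forall fun y => hM y t)⟩⟩

theorem isWeakConservationLaw :
    IsWeakConservationLaw sol.u fun x t => dflux fl fr x (sol.u x t) := by
  intro α β hα hβ
  have h := sol.weak (fun x t => α x * β t) (hα.contDiff_mul hβ) (hα.hasCompactSupport_mul hβ)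
    fun x t ht => by rw [hβ.eq_zero_of_notMem (notMem_Ioi.2 ht), mul_zero]
  simpa only [deriv_const_mul_field, deriv_mul_const_field] using h

theorem isWeakEntropyInequality : IsWeakEntropyInequality (fun x t => |sol.u x t - cAB A B x|)
    fun x t => dflux fl fr x (max (sol.u x t) (cAB A B x)) -
      dflux fl fr x (min (sol.u x t) (cAB A B x)) := by
  intro α β hα hβ hα0 hβ0
  have h := sol.interfaceEntropy (fun x t => α x * β t) (hα.contDiff_mul hβ)
    (hα.hasCompactSupport_mul hβ) (fun x t => mul_nonneg (hα0 x) (hβ0 t))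
    fun x t ht => by rw [hβ.eq_zero_of_notMem (notMem_Ioi.2 ht), mul_zero]
  simpa only [deriv_const_mul_field, deriv_mul_const_field, sign_sub_mul_sub_eq_max_sub_min] using h

theorem continuousOn_integral_mul {α : ℝ → ℝ} (hα : IsTestFun univ α) :
    ContinuousOn (fun t => ∫ x, sol.u x t * α x) (Ioi 0) := by
  intro t₀ ht₀
  obtain ⟨C, hC⟩ := hα.hasCompactSupport.exists_bound_of_continuous hα.contDiff.continuous
  obtain ⟨r, hr⟩ := hα.hasCompactSupport.isCompact.isBounded.subset_closedBall 0
  rw [Real.closedBall_eq_Icc, zero_sub, zero_add] at hr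
  have hslice : ∀ t, IsBddMeas fun x => sol.u x t := sol.isBddMeas_uncurry_u.slice_right
  have hbound : ∀ t, ‖(∫ x, sol.u x t * α x) - ∫ x, sol.u x t₀ * α x‖ ≤
      C * ∫ x in Icc (-r) r, |sol.u x t - sol.u x t₀| := by
    intro t
    rw [← integral_sub ((hslice t).integrable_mul hα.integrable)
      ((hslice t₀).integrable_mul hα.integrable), ← integral_const_mul,
      ← setIntegral_eq_integral_of_forall_compl_eq_zero (s := Icc (-r) r) fun x hx => by
        simp [image_eq_zero_of_notMem_tsupport fun h => hx (hr h)]]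
    refine norm_integral_le_of_norm_le ((((hslice t).sub (hslice t₀)).integrableOn
      isCompact_Icc.measure_ne_top).abs.const_mul C) (Eventually.of_forall fun x => ?_)
    rw [← sub_mul, norm_mul, mul_comm, Real.norm_eq_abs (_ - _)]
    exact mul_le_mul_of_nonneg_right (hC x) (abs_nonneg _)
  refine tendsto_iff_norm_sub_tendsto_zero.2 (squeeze_zero (fun _ => norm_nonneg _) hbound ?_)
  simpa only [mul_zero] using
    ((sol.timeCont r t₀ (le_of_lt ht₀)).mono_left
      (nhdsWithin_mono _ Ioi_subset_Ici_self)).const_mul C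

variable (hl : Continuous fl) (hr : Continuous fr)
include hl hr

theorem exists_isPotential :
    ∃ U, IsPotential sol.u (fun x t => dflux fl fr x (sol.u x t)) U :=
  sol.isWeakConservationLaw.exists_isPotential sol.isBddMeas_uncurry_u
    (isBddMeas_dflux hl hr measurable_fst sol.isBddMeas_uncurry_u)
    fun _ => sol.continuousOn_integral_mul

variable {sol} {U : ℝ × ℝ → ℝ}
  (hU : IsPotential sol.u (fun x t => dflux fl fr x (sol.u x t)) U) {Z : ℝ → ℝ} {L : ℝ≥0}
  (hZ : LipschitzWith L Z)
include hU hZ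

theorem ae_hasDerivAt_potential_left : ∀ᵐ t, 0 < t → HasDerivAt (fun s => U (Z s, s))
    (sol.um (Z t) t * deriv Z t -
      if Z t ≤ 0 then fl (sol.um (Z t) t) else fr (sol.um (Z t) t)) t := by
  have hshift : ∀ t, Tendsto (Z t + ·) (𝓝[<] 0) (𝓝[<] (Z t)) := fun t =>
    tendsto_const_add_nhdsWithin _ fun y hy => mem_Iio.2 (add_lt_of_neg_right _ hy)
  exact hU.ae_hasDerivAt_comp_curve hZ isOpen_Iio (by simp [closure_Iio])
    (fun t ht => (sol.um_spec _ t ht).comp (hshift t))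
    fun t ht => (tendsto_dflux_nhdsLT hl hr (sol.um_spec _ t ht)).comp (hshift t)

theorem ae_hasDerivAt_potential_right : ∀ᵐ t, 0 < t → HasDerivAt (fun s => U (Z s, s))
    (sol.up (Z t) t * deriv Z t -
      if Z t < 0 then fl (sol.up (Z t) t) else fr (sol.up (Z t) t)) t := by
  have hshift : ∀ t, Tendsto (Z t + ·) (𝓝[>] 0) (𝓝[>] (Z t)) := fun t =>
    tendsto_const_add_nhdsWithin _ fun y hy => mem_Ioi.2 (lt_add_of_pos_right _ hy)
  exact hU.ae_hasDerivAt_comp_curve hZ isOpen_Ioi (by simp [closure_Ioi])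
    (fun t ht => (sol.up_spec _ t ht).comp (hshift t))
    fun t ht => (tendsto_dflux_nhdsGT hl hr (sol.up_spec _ t ht)).comp (hshift t)

omit hU hZ
variable (sol)

theorem ae_trace_flux_eq : ∀ᵐ t, 0 < t → fl (sol.um 0 t) = fr (sol.up 0 t) := by
  obtain ⟨U, hU⟩ := sol.exists_isPotential hl hr
  have hZ : LipschitzWith 0 fun _ : ℝ => (0 : ℝ) := LipschitzWith.const 0
  filter_upwards [ae_hasDerivAt_potential_left hl hr hU hZ,
    ae_hasDerivAt_potential_right hl hr hU hZ] with t hm hp ht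
  simpa using (hm ht).unique (hp ht)

theorem ae_trace_entropyFlux_le : ∀ᵐ t, 0 < t →
    fr (max (sol.up 0 t) B) - fr (min (sol.up 0 t) B) ≤
      fl (max (sol.um 0 t) A) - fl (min (sol.um 0 t) A) := by
  have hc : IsBddMeas fun p : ℝ × ℝ => cAB A B p.1 := (isBddMeas_cAB A B).comp measurable_fst
  have hu := sol.isBddMeas_uncurry_u
  refine sol.isWeakEntropyInequality.ae_trace_le ((hu.sub hc).continuous_comp continuous_abs)
    ((isBddMeas_dflux hl hr measurable_fst (hu.max hc)).sub
      (isBddMeas_dflux hl hr measurable_fst (hu.min hc))) (fun t ht => ?_) fun t ht => ?_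
  · have hum := sol.um_spec 0 t ht
    have hA := tendsto_cAB_nhdsLT_zero A B
    simpa using (tendsto_dflux_nhdsLT hl hr (hum.max hA)).sub
      (tendsto_dflux_nhdsLT hl hr (hum.min hA))
  · have hup := sol.up_spec 0 t ht
    have hB := tendsto_cAB_nhdsGT_zero A B
    simpa using (tendsto_dflux_nhdsGT hl hr (hup.max hB)).sub
      (tendsto_dflux_nhdsGT hl hr (hup.min hB))

theorem ae_le_trace_flux (hA : ∀ v ≤ A, fl A ≤ fl v) (hB : ∀ w, B ≤ w → fr B ≤ fr w)
    (hAB : fl A = fr B) : ∀ᵐ t, 0 < t → fl A ≤ fl (sol.um 0 t) := by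
  filter_upwards [sol.ae_trace_flux_eq hl hr, sol.ae_trace_entropyFlux_le hl hr] with t heq hent ht
    using le_flux_of_entropyFlux_le hA hB hAB (heq ht) (hent ht)

end ABSol

end Solution

theorem lipschitzOnWith_of_tendsto {ι X Y : Type*} [PseudoMetricSpace X] [PseudoMetricSpace Y]
    {l : Filter ι} [l.NeBot] {L : ℝ≥0} {s : Set X} {gs : ι → X → Y} {g : X → Y}
    (h : ∀ i, LipschitzOnWith L (gs i) s)
    (hlim : ∀ x ∈ s, Tendsto (fun i => gs i x) l (𝓝 (g x))) : LipschitzOnWith L g s :=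
  LipschitzOnWith.of_dist_le_mul fun x hx y hy =>
    le_of_tendsto' ((hlim x hx).dist (hlim y hy)) fun i => (h i).dist_le_mul x hx y hy

section MonotoneAlong

/-- `W` is nondecreasing along the curve `t ↦ (ζ t, t)` on every time interval within `[0, T]`
during which `ζ` stays in `I`. -/
def MonotoneAlong (T : ℝ) (I : Set ℝ) (W : ℝ × ℝ → ℝ) (ζ : ℝ → ℝ) : Prop :=
  ∀ s t, 0 ≤ s → s ≤ t → t ≤ T → MapsTo ζ (Icc s t) I → W (ζ s, s) ≤ W (ζ t, t)

variable {T : ℝ} {I : Set ℝ} {W : ℝ × ℝ → ℝ} {ζ Z : ℝ → ℝ}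

theorem MonotoneAlong.congr (h : MonotoneAlong T I W Z) (hEq : EqOn ζ Z (Icc 0 T)) :
    MonotoneAlong T I W ζ := by
  intro s t hs hst htT hmaps
  have hEq' : EqOn ζ Z (Icc s t) := hEq.mono (Icc_subset_Icc hs htT)
  rw [hEq' (left_mem_Icc.2 hst), hEq' (right_mem_Icc.2 hst)]
  exact h s t hs hst htT (hmaps.congr hEq')

theorem MonotoneAlong.deriv_nonneg (h : MonotoneAlong T I W Z) (hI : IsOpen I) (hZ : Continuous Z)
    {t : ℝ} (ht : t ∈ Ioo 0 T) (htI : Z t ∈ I) : 0 ≤ deriv (fun s => W (Z s, s)) t := by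
  obtain ⟨b, c, -, hnhds, hsub⟩ := exists_Icc_mem_subset_of_mem_nhds
    (inter_mem (isOpen_Ioo.mem_nhds ht) (hZ.continuousAt.preimage_mem_nhds (hI.mem_nhds htI)))
  have hmono : MonotoneOn (fun s => W (Z s, s)) (Icc b c) := fun s hs r hr hsr =>
    h s r (hsub hs).1.1.le hsr (hsub hr).1.2.le fun τ hτ =>
      (hsub ⟨hs.1.trans hτ.1, hτ.2.trans hr.2⟩).2
  rw [← derivWithin_of_mem_nhds hnhds]
  exact hmono.derivWithin_nonneg

theorem monotoneAlong_of_ae_deriv_nonneg {K L : ℝ≥0} (hW : LipschitzWith K W)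
    (hZ : LipschitzWith L Z)
    (h : ∀ᵐ t, t ∈ Ioo 0 T → Z t ∈ I → 0 ≤ deriv (fun s => W (Z s, s)) t) :
    MonotoneAlong T I W Z := by
  intro s t hs hst htT hmaps
  have hWZ : LipschitzWith _ fun s => W (Z s, s) := hW.comp (hZ.prodMk LipschitzWith.id)
  refine le_of_ae_deriv_nonneg hWZ.lipschitzOnWith.absolutelyContinuousOnInterval hst ?_
  filter_upwards [h] with τ hτ hτst
  exact hτ ⟨hs.trans_lt hτst.1, hτst.2.trans_le htT⟩ (hmaps (Ioo_subset_Icc_self hτst))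

theorem MonotoneAlong.of_tendstoUniformlyOn {ι : Type*} {l : Filter ι} [l.NeBot]
    {ζs : ι → ℝ → ℝ} (h : ∀ i, MonotoneAlong T I W (ζs i)) (hI : IsOpen I) (hW : Continuous W)
    (hζ : ContinuousOn ζ (Icc 0 T)) (hunif : TendstoUniformlyOn ζs ζ l (Icc 0 T)) :
    MonotoneAlong T I W ζ := by
  intro s t hs hst htT hmaps
  have hsub : Icc s t ⊆ Icc 0 T := Icc_subset_Icc hs htT
  obtain ⟨ε, hε, hthick⟩ := (isCompact_Icc.image_of_continuousOn
    (hζ.mono hsub)).exists_thickening_subset_open hI hmaps.image_subset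
  have hmaps' : ∀ᶠ i in l, MapsTo (ζs i) (Icc s t) I := by
    filter_upwards [Metric.tendstoUniformlyOn_iff.1 hunif ε hε] with i hi τ hτ
    exact hthick (Metric.mem_thickening_iff.2
      ⟨ζ τ, mem_image_of_mem ζ hτ, dist_comm (ζ τ) _ ▸ hi τ (hsub hτ)⟩)
  have hlim : ∀ τ ∈ Icc s t, Tendsto (fun i => W (ζs i τ, τ)) l (𝓝 (W (ζ τ, τ))) := fun τ hτ =>
    (hW.tendsto _).comp ((hunif.tendsto_at (hsub hτ)).prodMk_nhds tendsto_const_nhds)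
  exact le_of_tendsto_of_tendsto (hlim s (left_mem_Icc.2 hst)) (hlim t (right_mem_Icc.2 hst))
    (hmaps'.mono fun i hi => h i s t hs hst htT hi)

end MonotoneAlong

section Characteristics

variable {T γ A B : ℝ} {fl fr u0 ζ Z : ℝ → ℝ} {sol : ABSol fl fr A B u0}

/-- The conditions of an `AB`-gic at the single time `t`, with `deriv ζ t` in place of
`HasDerivAt`: the two agree almost everywhere along Lipschitz curves. -/
def IsABgicAt (fl fr : ℝ → ℝ) (γ : ℝ) (sol : ABSol fl fr A B u0) (ζ : ℝ → ℝ) (t : ℝ) : Prop :=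
  (ζ t < 0 → deriv ζ t = deriv fl (sol.um (ζ t) t) ∧
    deriv fl (sol.um (ζ t) t) = deriv fl (sol.up (ζ t) t)) ∧
  (0 < ζ t → deriv ζ t = deriv fr (sol.um (ζ t) t) ∧
    deriv fr (sol.um (ζ t) t) = deriv fr (sol.up (ζ t) t)) ∧
  (ζ t = 0 → fl (sol.um 0 t) = γ ∧ fr (sol.up 0 t) = γ)

theorem ae_isABgicAt_iff_of_eqOn (hEq : EqOn ζ Z (Icc 0 T)) :
    (∀ᵐ t, t ∈ Ioo 0 T → IsABgicAt fl fr γ sol ζ t) ↔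
      ∀ᵐ t, t ∈ Ioo 0 T → IsABgicAt fl fr γ sol Z t := by
  refine eventually_congr (Eventually.of_forall fun t => forall_congr' fun ht => ?_)
  have hloc : ζ =ᶠ[𝓝 t] Z := hEq.eventuallyEq_of_mem (Icc_mem_nhds ht.1 ht.2)
  rw [IsABgicAt, IsABgicAt, hloc.deriv_eq, hloc.eq_of_nhds]

theorem isABgic_iff_ae_isABgicAt : IsABgic T fl fr γ sol ζ ↔
    (∃ K, LipschitzOnWith K ζ (Icc 0 T)) ∧ ∀ᵐ t, t ∈ Ioo 0 T → IsABgicAt fl fr γ sol ζ t := by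
  rw [IsABgic, Measure.restrict_congr_set Ioo_ae_eq_Icc.symm, ae_restrict_iff' measurableSet_Ioo]
  refine and_congr_right fun ⟨K, hK⟩ => eventually_congr ?_
  filter_upwards [hK.ae_differentiableWithinAt_of_mem] with t hd
  refine forall_congr' fun ht => ?_
  have hdiff : DifferentiableAt ℝ ζ t :=
    (hd (Ioo_subset_Icc_self ht)).differentiableAt (Icc_mem_nhds ht.1 ht.2)
  have hderiv : ∀ v, HasDerivAt ζ v t ↔ deriv ζ t = v := fun v =>
    ⟨HasDerivAt.deriv, fun h => h ▸ hdiff.hasDerivAt⟩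
  simp only [IsABgicAt, hderiv]

theorem exists_lipschitzOnWith_of_isABgic (hl : Continuous (deriv fl)) (hr : Continuous (deriv fr))
    (sol : ABSol fl fr A B u0) :
    ∃ L : ℝ≥0, ∀ ζ, IsABgic T fl fr γ sol ζ → LipschitzOnWith L ζ (Icc 0 T) := by
  obtain ⟨M, hM⟩ := sol.exists_abs_trace_le
  obtain ⟨Cl, hCl⟩ :=
    (isCompact_Icc (a := -M) (b := M)).exists_bound_of_continuousOn hl.continuousOn
  obtain ⟨Cr, hCr⟩ :=
    (isCompact_Icc (a := -M) (b := M)).exists_bound_of_continuousOn hr.continuousOn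
  refine ⟨(max Cl Cr).toNNReal, fun ζ hζ => ?_⟩
  obtain ⟨⟨K, hK⟩, hae⟩ := isABgic_iff_ae_isABgicAt.1 hζ
  refine lipschitzOnWith_of_ae_abs_deriv_le hK ?_
  filter_upwards [hae, ae_deriv_eq_zero_of_eq ζ 0] with t hgic hzero ht
  have htrace : sol.um (ζ t) t ∈ Icc (-M) M := abs_le.1 (hM _ t ht.1).1
  refine le_trans ?_ (Real.le_coe_toNNReal _)
  obtain ⟨hneg, hpos, -⟩ := hgic ht
  rcases lt_trichotomy (ζ t) 0 with h | h | h
  · rw [(hneg h).1]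
    exact (hCl _ htrace).trans (le_max_left _ _)
  · rw [hzero h, abs_zero]
    exact ((norm_nonneg _).trans (hCl _ htrace)).trans (le_max_left _ _)
  · rw [(hpos h).1]
    exact (hCr _ htrace).trans (le_max_right _ _)

/-- The potential `p x - f(p) t` of the constant solution `p` of `u_t + f(u)_x = 0`. -/
def constPotential (f : ℝ → ℝ) (p : ℝ) (z : ℝ × ℝ) : ℝ := p * z.1 - f p * z.2

/-- The potential of the steady solution `cAB A B`, whose flux is the constant `γ`. -/
def connectionPotential (A B γ : ℝ) (z : ℝ × ℝ) : ℝ := A * min z.1 0 + B * max z.1 0 - γ * z.2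

theorem exists_lipschitzWith_constPotential (f : ℝ → ℝ) (p : ℝ) :
    ∃ K, LipschitzWith K (constPotential f p) :=
  ⟨_, ((lipschitzWith_smul p).comp LipschitzWith.prod_fst).sub
    ((lipschitzWith_smul (f p)).comp LipschitzWith.prod_snd)⟩

theorem exists_lipschitzWith_connectionPotential (A B γ : ℝ) :
    ∃ K, LipschitzWith K (connectionPotential A B γ) :=
  ⟨_, (((lipschitzWith_smul A).comp (LipschitzWith.prod_fst.min_const 0)).add
    ((lipschitzWith_smul B).comp (LipschitzWith.prod_fst.max_const 0))).sub
    ((lipschitzWith_smul γ).comp LipschitzWith.prod_snd)⟩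

theorem connectionPotential_eq_of_nonpos {z : ℝ × ℝ} (hz : z.1 ≤ 0) :
    connectionPotential A B (fl A) z = constPotential fl A z := by
  simp [connectionPotential, constPotential, min_eq_left hz, max_eq_right hz]

theorem connectionPotential_eq_of_nonneg {z : ℝ × ℝ} (hz : 0 ≤ z.1) :
    connectionPotential A B (fr B) z = constPotential fr B z := by
  simp [connectionPotential, constPotential, min_eq_right hz, max_eq_left hz]

theorem deriv_sub_constPotential {U : ℝ × ℝ → ℝ} {D t : ℝ} (f : ℝ → ℝ) (p : ℝ)
    (hU : HasDerivAt (fun s => U (Z s, s)) D t) (hZ : DifferentiableAt ℝ Z t) :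
    deriv (fun s => U (Z s, s) - constPotential f p (Z s, s)) t = D - (p * deriv Z t - f p) := by
  refine (hU.sub ((hZ.hasDerivAt.const_mul p).sub ?_)).deriv
  simpa using (hasDerivAt_id t).const_mul (f p)

section Slopes

variable (hcl : ConvexOn ℝ univ fl) (hcr : ConvexOn ℝ univ fr) (hdl : Differentiable ℝ fl)
  (hdr : Differentiable ℝ fr) {U : ℝ × ℝ → ℝ}
  (hU : IsPotential sol.u (fun x t => dflux fl fr x (sol.u x t)) U) {L : ℝ≥0}
  (hZ : LipschitzWith L Z)
include hdl hdr hU hZ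

include hcl in
theorem ae_slope_iff_of_neg : ∀ᵐ t, 0 < t → Z t < 0 →
    (deriv Z t = deriv fl (sol.um (Z t) t) ∧
        deriv fl (sol.um (Z t) t) = deriv fl (sol.up (Z t) t) ↔
      ∀ p, 0 ≤ deriv (fun s => U (Z s, s) - constPotential fl p (Z s, s)) t) := by
  filter_upwards [hZ.ae_differentiableAt,
    ABSol.ae_hasDerivAt_potential_left hdl.continuous hdr.continuous hU hZ,
    ABSol.ae_hasDerivAt_potential_right hdl.continuous hdr.continuous hU hZ]
    with t hZt hm hp ht hneg
  have hm := hm ht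
  have hp := hp ht
  rw [if_pos hneg.le] at hm
  rw [if_pos hneg] at hp
  simp only [deriv_sub_constPotential fl _ hm hZt, sub_nonneg]
  exact eq_deriv_and_deriv_eq_iff hcl hdl rfl (hm.unique hp)

include hcr in
theorem ae_slope_iff_of_pos : ∀ᵐ t, 0 < t → 0 < Z t →
    (deriv Z t = deriv fr (sol.um (Z t) t) ∧
        deriv fr (sol.um (Z t) t) = deriv fr (sol.up (Z t) t) ↔
      ∀ p, 0 ≤ deriv (fun s => U (Z s, s) - constPotential fr p (Z s, s)) t) := by
  filter_upwards [hZ.ae_differentiableAt,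
    ABSol.ae_hasDerivAt_potential_left hdl.continuous hdr.continuous hU hZ,
    ABSol.ae_hasDerivAt_potential_right hdl.continuous hdr.continuous hU hZ]
    with t hZt hm hp ht hpos
  have hm := hm ht
  have hp := hp ht
  rw [if_neg hpos.not_ge] at hm
  rw [if_neg hpos.not_gt] at hp
  simp only [deriv_sub_constPotential fr _ hm hZt, sub_nonneg]
  exact eq_deriv_and_deriv_eq_iff hcr hdr rfl (hm.unique hp)

omit hdl hdr hU in
theorem ae_hasDerivAt_connectionPotential_of_eq_zero (A B γ : ℝ) : ∀ᵐ t, Z t = 0 →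
    HasDerivAt (fun s => connectionPotential A B γ (Z s, s)) (-γ) t := by
  obtain ⟨K, hK⟩ := exists_lipschitzWith_connectionPotential A B 0
  have hG : LipschitzWith _ fun s => connectionPotential A B 0 (Z s, s) :=
    hK.comp (hZ.prodMk LipschitzWith.id)
  filter_upwards [hG.ae_differentiableAt, ae_deriv_eq_zero_of_eq _ 0] with t hd hzero h0
  have hGt := hd.hasDerivAt
  rw [hzero (by simp [connectionPotential, h0])] at hGt
  have h := hGt.fun_sub ((hasDerivAt_id t).const_mul γ)
  rw [zero_sub, mul_one] at h
  exact h.congr_of_eventuallyEq (Eventually.of_forall fun s => by simp [connectionPotential])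

omit hdl hdr hU in
theorem deriv_sub_connectionPotential_of_neg {t : ℝ} (h : Z t < 0) :
    deriv (fun s => U (Z s, s) - connectionPotential A B (fl A) (Z s, s)) t =
      deriv (fun s => U (Z s, s) - constPotential fl A (Z s, s)) t := by
  refine EventuallyEq.deriv_eq ?_
  filter_upwards [hZ.continuous.continuousAt.eventually_lt_const h] with s hs
  rw [connectionPotential_eq_of_nonpos (z := (Z s, s)) hs.le]

omit hdl hdr hU in
theorem deriv_sub_connectionPotential_of_pos {t : ℝ} (h : 0 < Z t) :
    deriv (fun s => U (Z s, s) - connectionPotential A B (fr B) (Z s, s)) t =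
      deriv (fun s => U (Z s, s) - constPotential fr B (Z s, s)) t := by
  refine EventuallyEq.deriv_eq ?_
  filter_upwards [hZ.continuous.continuousAt.eventually_const_lt h] with s hs
  rw [connectionPotential_eq_of_nonneg (z := (Z s, s)) hs.le]

variable (hAB : fl A = fr B) (hA : ∀ v ≤ A, fl A ≤ fl v) (hB : ∀ w, B ≤ w → fr B ≤ fr w)
include hAB hA hB

theorem ae_trace_iff_of_eq_zero : ∀ᵐ t, 0 < t → Z t = 0 →
    (fl (sol.um 0 t) = fl A ∧ fr (sol.up 0 t) = fl A ↔
      0 ≤ deriv (fun s => U (Z s, s) - connectionPotential A B (fl A) (Z s, s)) t) := by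
  filter_upwards [ABSol.ae_hasDerivAt_potential_left hdl.continuous hdr.continuous hU hZ,
    ae_hasDerivAt_connectionPotential_of_eq_zero hZ A B (fl A), ae_deriv_eq_zero_of_eq Z 0,
    sol.ae_trace_flux_eq hdl.continuous hdr.continuous,
    sol.ae_le_trace_flux hdl.continuous hdr.continuous hA hB hAB]
    with t hm hconn hzero heq hle ht h0
  have hm := hm ht
  rw [if_pos h0.le, h0, hzero h0, mul_zero, zero_sub] at hm
  rw [(hm.fun_sub (hconn h0)).deriv, ← heq ht, and_self]
  constructor <;> intro h <;> linarith [hle ht]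

include hcl hcr

theorem ae_deriv_sub_connectionPotential_nonneg
    (hgic : ∀ᵐ t, t ∈ Ioo 0 T → IsABgicAt fl fr (fl A) sol Z t) : ∀ᵐ t, t ∈ Ioo 0 T →
      0 ≤ deriv (fun s => U (Z s, s) - connectionPotential A B (fl A) (Z s, s)) t := by
  filter_upwards [hgic, ae_slope_iff_of_neg hcl hdl hdr hU hZ,
    ae_slope_iff_of_pos hcr hdl hdr hU hZ,
    ae_trace_iff_of_eq_zero hdl hdr hU hZ hAB hA hB] with t hgic hslopel hsloper htrace ht
  obtain ⟨hneg, hpos, hzero⟩ := hgic ht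
  rcases lt_trichotomy (Z t) 0 with h | h | h
  · rw [deriv_sub_connectionPotential_of_neg hZ h]
    exact (hslopel ht.1 h).1 (hneg h) A
  · exact (htrace ht.1 h).1 (hzero h)
  · rw [hAB, deriv_sub_connectionPotential_of_pos hZ h]
    exact (hsloper ht.1 h).1 (hpos h) B

/-- On the interface only the connection is compared with `sol`: the entropy condition bounds the
trace flux from below by `fl A`, and monotonicity along `ζ = 0` bounds it from above. -/
theorem isABgic_iff_monotoneAlong_of_lipschitzWith : IsABgic T fl fr (fl A) sol Z ↔
    (∀ p, MonotoneAlong T (Iio 0) (fun z => U z - constPotential fl p z) Z) ∧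
    (∀ p, MonotoneAlong T (Ioi 0) (fun z => U z - constPotential fr p z) Z) ∧
    MonotoneAlong T univ (fun z => U z - connectionPotential A B (fl A) z) Z := by
  obtain ⟨K, hK⟩ := hU.lipschitz
  obtain ⟨KAB, hKAB⟩ := exists_lipschitzWith_connectionPotential A B (fl A)
  rw [isABgic_iff_ae_isABgicAt, and_iff_right ⟨L, hZ.lipschitzOnWith⟩]
  constructor
  · intro hgic
    refine ⟨fun p => ?_, fun p => ?_, ?_⟩
    · obtain ⟨Kp, hKp⟩ := exists_lipschitzWith_constPotential fl p
      refine monotoneAlong_of_ae_deriv_nonneg (hK.sub hKp) hZ ?_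
      filter_upwards [hgic, ae_slope_iff_of_neg hcl hdl hdr hU hZ] with t hgic hslope ht hneg
      exact (hslope ht.1 hneg).1 ((hgic ht).1 hneg) p
    · obtain ⟨Kp, hKp⟩ := exists_lipschitzWith_constPotential fr p
      refine monotoneAlong_of_ae_deriv_nonneg (hK.sub hKp) hZ ?_
      filter_upwards [hgic, ae_slope_iff_of_pos hcr hdl hdr hU hZ] with t hgic hslope ht hpos
      exact (hslope ht.1 hpos).1 ((hgic ht).2.1 hpos) p
    · refine monotoneAlong_of_ae_deriv_nonneg (hK.sub hKAB) hZ ?_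
      exact (ae_deriv_sub_connectionPotential_nonneg hcl hcr hdl hdr hU hZ hAB hA hB hgic).mono
        fun t h ht _ => h ht
  · rintro ⟨hneg, hpos, hconn⟩
    filter_upwards [ae_slope_iff_of_neg hcl hdl hdr hU hZ, ae_slope_iff_of_pos hcr hdl hdr hU hZ,
        ae_trace_iff_of_eq_zero hdl hdr hU hZ hAB hA hB] with t hslopel hsloper htrace ht
    exact ⟨fun h => (hslopel ht.1 h).2 fun p => (hneg p).deriv_nonneg isOpen_Iio hZ.continuous ht h,
      fun h => (hsloper ht.1 h).2 fun p => (hpos p).deriv_nonneg isOpen_Ioi hZ.continuous ht h,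
      fun h => (htrace ht.1 h).2 (hconn.deriv_nonneg isOpen_univ hZ.continuous ht (mem_univ _))⟩

omit hZ in
theorem isABgic_iff_monotoneAlong : IsABgic T fl fr (fl A) sol ζ ↔
    (∃ K, LipschitzOnWith K ζ (Icc 0 T)) ∧
    (∀ p, MonotoneAlong T (Iio 0) (fun z => U z - constPotential fl p z) ζ) ∧
    (∀ p, MonotoneAlong T (Ioi 0) (fun z => U z - constPotential fr p z) ζ) ∧
    MonotoneAlong T univ (fun z => U z - connectionPotential A B (fl A) z) ζ := by
  have hlip : IsABgic T fl fr (fl A) sol ζ ↔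
      (∃ K, LipschitzOnWith K ζ (Icc 0 T)) ∧ IsABgic T fl fr (fl A) sol ζ :=
    (and_iff_right_of_imp And.left).symm
  rw [hlip]
  refine and_congr_right fun ⟨K, hK⟩ => ?_
  obtain ⟨Z, hZ, hEq⟩ := hK.extend_real
  have hmono : ∀ I W, MonotoneAlong T I W ζ ↔ MonotoneAlong T I W Z := fun I W =>
    ⟨fun h => h.congr hEq.symm, fun h => h.congr hEq⟩
  simp only [hmono, ← isABgic_iff_monotoneAlong_of_lipschitzWith hcl hcr hdl hdr hU hZ hAB hA hB,
    isABgic_iff_ae_isABgicAt, ae_isABgicAt_iff_of_eqOn hEq, and_congr_left_iff]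
  exact fun _ => iff_of_true ⟨K, hK⟩ ⟨K, hZ.lipschitzOnWith⟩

end Slopes

end Characteristics

theorem charSet_closed_graph_general {T A B : ℝ} {fl fr : ℝ → ℝ} (hT : 0 ≤ T)
    (hfl : ContDiff ℝ 1 fl) (hfr : ContDiff ℝ 1 fr) (hcl : ConvexOn ℝ univ fl)
    (hcr : ConvexOn ℝ univ fr) (hAB : fl A = fr B) (hA : deriv fl A ≤ 0) (hB : 0 ≤ deriv fr B)
    {u0 : ℝ → ℝ} (sol : ABSol fl fr A B u0) {ι : Type*} {l : Filter ι} [l.NeBot]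
    {xs : ι → ℝ} {x : ℝ} {ζs : ι → ℝ → ℝ} {ζ : ℝ → ℝ} (hx : Tendsto xs l (𝓝 x))
    (hmem : ∀ i, ζs i ∈ charSet T fl fr (fl A) sol (xs i))
    (hunif : TendstoUniformlyOn ζs ζ l (Icc 0 T)) : ζ ∈ charSet T fl fr (fl A) sol x := by
  have hdl : Differentiable ℝ fl := hfl.differentiable one_ne_zero
  have hdr : Differentiable ℝ fr := hfr.differentiable one_ne_zero
  obtain ⟨U, hU⟩ := sol.exists_isPotential hdl.continuous hdr.continuous
  obtain ⟨K, hK⟩ := hU.lipschitz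
  have hchar : ∀ ζ, _ ↔ _ := fun ζ => isABgic_iff_monotoneAlong (T := T) (ζ := ζ) hcl hcr hdl hdr hU
    hAB (fun _ => le_of_convexOn_of_deriv_nonpos hcl (hdl A) hA)
    fun _ => le_of_convexOn_of_deriv_nonneg hcr (hdr B) hB
  obtain ⟨L, hL⟩ := exists_lipschitzOnWith_of_isABgic (T := T) (γ := fl A) hfl.continuous_deriv_one
    hfr.continuous_deriv_one sol
  have hlip : LipschitzOnWith L ζ (Icc 0 T) :=
    lipschitzOnWith_of_tendsto (fun i => hL _ (hmem i).1) fun t ht => hunif.tendsto_at ht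
  have hclosed : ∀ {I V}, IsOpen I → (∃ K, LipschitzWith K V) →
      (∀ i, MonotoneAlong T I (fun z => U z - V z) (ζs i)) →
      MonotoneAlong T I (fun z => U z - V z) ζ := fun hI ⟨_, hV⟩ h =>
    .of_tendstoUniformlyOn h hI (hK.continuous.sub hV.continuous) hlip.continuousOn hunif
  have hmono := fun i => ((hchar (ζs i)).1 (hmem i).1).2
  refine ⟨(hchar ζ).2 ⟨⟨L, hlip⟩, fun p => ?_, fun p => ?_, ?_⟩, ?_⟩
  · exact hclosed isOpen_Iio (exists_lipschitzWith_constPotential fl p) fun i => (hmono i).1 p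
  · exact hclosed isOpen_Ioi (exists_lipschitzWith_constPotential fr p) fun i => (hmono i).2.1 p
  · exact hclosed isOpen_univ (exists_lipschitzWith_connectionPotential A B (fl A))
      fun i => (hmono i).2.2
  · exact tendsto_nhds_unique (hunif.tendsto_at (right_mem_Icc.2 hT))
      (hx.congr fun i => (hmem i).2.symm)

/-- the set-valued map `x ↦ C(u,x)` has closed graph with respect
to uniform convergence on `[0,T]` (Proposition 4.1 (ii) of the paper). -/
theorem charSet_closed_graph
    {T a θl θr A B : ℝ} {fl fr : ℝ → ℝ}
    (hT : 0 < T)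
    (hflC : ContDiff ℝ 2 fl) (hfrC : ContDiff ℝ 2 fr)
    (ha : 0 < a)
    (hfl2 : ∀ w : ℝ, a ≤ deriv (deriv fl) w)
    (hfr2 : ∀ w : ℝ, a ≤ deriv (deriv fr) w)
    (hf0 : fl 0 = fr 0) (hf1 : fl 1 = fr 1)
    (hθl : deriv fl θl = 0) (hθr : deriv fr θr = 0)
    (hθl0 : 0 ≤ θl) (hθr1 : θr ≤ 1)
    (hAB : fl A = fr B) (hA' : deriv fl A ≤ 0) (hB' : 0 ≤ deriv fr B)
    {u0 : ℝ → ℝ} (hu0 : IsLinf u0) (sol : ABSol fl fr A B u0)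
    (xs : ℕ → ℝ) (x : ℝ) (ζs : ℕ → ℝ → ℝ) (ζ : ℝ → ℝ)
    (hx : Tendsto xs atTop (nhds x))
    (hmem : ∀ n, ζs n ∈ charSet T fl fr (fl A) sol (xs n))
    (hunif : TendstoUniformlyOn ζs ζ atTop (Icc 0 T)) :
    ζ ∈ charSet T fl fr (fl A) sol x := by
  exact charSet_closed_graph_general hT.le (hflC.of_le one_le_two) (hfrC.of_le one_le_two)
    (convexOn_univ_of_deriv2_pos (hflC.differentiable two_ne_zero) fun w =>
      ha.trans_le (hfl2 w))
    (convexOn_univ_of_deriv2_pos (hfrC.differentiable two_ne_zero) fun w =>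
      ha.trans_le (hfr2 w))
    hAB hA' hB' sol hx hmem hunif
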